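/- arXiv:1108.2950 — 2 statements merged into one kernel-verified Lean document; each statement's English description precedes it below -/
import Mathlib

section
/- Every 7-regular graph admits a zero-sum 5-flow. -/
open Finset SimpleGraph

/-!
It suffices to find a subgraph `N` of `G` in which all degrees are 3 or 4 and adjacent vertices
have equal degrees. By Hall's theorem some permutation of the vertices moves each of them along an
edge of `N`, and subtracting 1 along it from a flow that is constant outside `N` and on each
component of `N` balances every vertex.

To find `N`, split the vertices into minimal sets that only one edge leaves and a remaining core,
and cut the edges between the parts into semi-edges. No proper subset of a part is left by a single
edge, so Tutte's theorem yields a 3-factor of each part in which semi-edges may be used freely.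
Such a factor uses the edge leaving a minimal part, by parity. If the far end of that edge does
not agree, the factor of the part is replaced by its complement, a 4-factor that avoids the edge.
-/

section WeightedTutte

variable {W : Type*} [Fintype W]

theorem ncard_add_two_le_ncard_oddComponents {H : SimpleGraph W}
    (heven : Even (Fintype.card W)) {U : Set W} (hU : H.IsTutteViolator U) :
    U.ncard + 2 ≤ ((⊤ : H.Subgraph).deleteVerts U).coe.oddComponents.ncard := by
  have hcard : Nat.card ((⊤ : H.Subgraph).deleteVerts U).verts + U.ncard = Fintype.card W := by
    rw [Subgraph.deleteVerts_verts, Subgraph.verts_top, ← Set.compl_eq_univ_sdiff,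
      Nat.card_coe_set_eq, ← Nat.card_eq_fintype_card, add_comm, Set.ncard_add_ncard_compl]
  have hparity := odd_ncard_oddComponents ((⊤ : H.Subgraph).deleteVerts U).coe
  unfold IsTutteViolator at hU
  grind

theorem exists_disjoint_odd_of_not_exists_isPerfectMatching (H : SimpleGraph W)
    (heven : Even (Fintype.card W)) (hH : ¬ ∃ M : H.Subgraph, M.IsPerfectMatching) :
    ∃ (U : Finset W) (𝒬 : Finset (Finset W)), #U + 2 ≤ #𝒬 ∧
      (𝒬 : Set (Finset W)).PairwiseDisjoint id ∧ (∀ Q ∈ 𝒬, Odd #Q) ∧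
      ∀ Q ∈ 𝒬, ∀ a ∈ Q, a ∉ U ∧ ∀ b, H.Adj a b → b ∉ U → b ∈ Q := by
  classical
  obtain ⟨U, hU⟩ : ∃ U, H.IsTutteViolator U := by simpa [tutte] using hH
  let L := ((⊤ : H.Subgraph).deleteVerts U).coe
  let comp (c : L.ConnectedComponent) : Finset W :=
    c.supp.toFinset.map (Function.Embedding.subtype _)
  have mem_comp (c w) : w ∈ comp c ↔ ∃ hw, L.connectedComponentMk ⟨w, hw⟩ = c := by
    simp [comp]
  have comp_eq {c c' w} (h : w ∈ comp c) (h' : w ∈ comp c') : c = c' := by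
    obtain ⟨⟨_, rfl⟩, _, rfl⟩ := (mem_comp c w).1 h, (mem_comp c' w).1 h'
    rfl
  have card_comp (c) : #(comp c) = c.supp.ncard := by
    simp [comp, Set.ncard_eq_toFinset_card']
  have comp_injOn : Set.InjOn comp L.oddComponents.toFinset := fun c hc c' _ h => by
    have hodd : Odd #(comp c) := by simpa [card_comp] using hc
    obtain ⟨w, hw⟩ := card_pos.1 hodd.pos
    exact comp_eq hw (h ▸ hw)
  refine ⟨U.toFinset, L.oddComponents.toFinset.image comp, ?_, ?_, ?_, ?_⟩
  · rw [card_image_of_injOn comp_injOn, ← Set.ncard_eq_toFinset_card',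
      ← Set.ncard_eq_toFinset_card']
    exact ncard_add_two_le_ncard_oddComponents heven hU
  · rintro _ hQ _ hQ' hne
    obtain ⟨⟨c, -, rfl⟩, c', -, rfl⟩ := mem_image.1 hQ, mem_image.1 hQ'
    exact Finset.disjoint_left.2 fun w h h' => hne (congrArg comp (comp_eq h h'))
  · simp [card_comp]
  · rintro _ hQ a ha
    obtain ⟨c, -, rfl⟩ := mem_image.1 hQ
    obtain ⟨haU, rfl⟩ := (mem_comp c a).1 ha
    have haU' : a ∉ U := by simpa using haU
    refine ⟨by simpa using haU', fun b hab hb => ?_⟩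
    have hbU : b ∉ U := by simpa using hb
    refine (mem_comp _ b).2 ⟨by simpa using hbU, ConnectedComponent.eq.2 (Adj.reachable ?_)⟩
    simp [L, hab.symm, hbU, haU']

variable [DecidableEq W]

/-- The total weight that `y` sends out of the vertex set `Q`. -/
def cutWeight (y : W → W → ℕ) (Q : Finset W) : ℕ :=
  ∑ q ∈ Q, ∑ w ∈ Qᶜ, y q w

theorem cutWeight_eq_sum_ite (y : W → W → ℕ) (Q : Finset W) :
    cutWeight y Q = ∑ q, ∑ w, if q ∈ Q ∧ w ∉ Q then y q w else 0 := by
  simp only [cutWeight, ite_and, sum_ite_irrel, sum_const_zero, ← sum_filter, filter_univ_mem,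
    filter_not, compl_eq_univ_sdiff]

theorem sum_cutWeight_le_sum (H : SimpleGraph W) (y : W → W → ℕ)
    (hy : ∀ q w, y q w ≠ 0 → H.Adj q w) (U : Finset W) (𝒬 : Finset (Finset W))
    (hdisj : (𝒬 : Set (Finset W)).PairwiseDisjoint id)
    (hclosed : ∀ Q ∈ 𝒬, ∀ a ∈ Q, ∀ b, H.Adj a b → b ∉ U → b ∈ Q) :
    ∑ Q ∈ 𝒬, cutWeight y Q ≤ ∑ w ∈ U, ∑ q, y q w :=
  calc ∑ Q ∈ 𝒬, cutWeight y Q ≤ ∑ Q ∈ 𝒬, ∑ q ∈ Q, ∑ w ∈ U, y q w := by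
        refine sum_le_sum fun Q hQ => sum_le_sum fun q hq =>
          sum_le_sum_of_ne_zero fun w hw hne => ?_
        by_contra hwU
        exact mem_compl.1 hw (hclosed Q hQ q hq w (hy q w hne) hwU)
    _ = ∑ q ∈ 𝒬.biUnion id, ∑ w ∈ U, y q w := (sum_biUnion hdisj).symm
    _ ≤ ∑ q, ∑ w ∈ U, y q w := sum_le_sum_of_subset (subset_univ _)
    _ = ∑ w ∈ U, ∑ q, y q w := sum_comm

-- A Tutte violator `U` would leave more than `#U` odd components of weight at least `c`, yet
-- each vertex of `U` absorbs weight at most `c`.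
theorem exists_isPerfectMatching_of_cutWeight (H : SimpleGraph W) (y : W → W → ℕ) {c : ℕ}
    (hc : 0 < c) (hy : ∀ q w, y q w ≠ 0 → H.Adj q w) (hyc : ∀ w, ∑ q, y q w ≤ c)
    (heven : Even (Fintype.card W))
    (hlight : ∀ Q Q', Disjoint Q Q' → Odd #Q → Odd #Q' → cutWeight y Q < c → cutWeight y Q' < c →
      ∃ a ∈ Q, ∃ b ∈ Q', H.Adj a b) :
    ∃ M : H.Subgraph, M.IsPerfectMatching := by
  by_contra hM
  obtain ⟨U, 𝒬, hcard, hdisj, hodd, hclosed⟩ :=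
    exists_disjoint_odd_of_not_exists_isPerfectMatching H heven hM
  have light_le_one : #{Q ∈ 𝒬 | cutWeight y Q < c} ≤ 1 := by
    refine card_le_one.2 fun Q hQ Q' hQ' => ?_
    rw [mem_filter] at hQ hQ'
    by_contra hne
    have hQQ' : Disjoint Q Q' := hdisj hQ.1 hQ'.1 hne
    obtain ⟨a, ha, b, hb, hab⟩ := hlight Q Q' hQQ' (hodd Q hQ.1) (hodd Q' hQ'.1) hQ.2 hQ'.2
    exact Finset.disjoint_left.1 hQQ'
      ((hclosed Q hQ.1 a ha).2 b hab (hclosed Q' hQ'.1 b hb).1) hb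
  have heavy_gt : #U + 1 ≤ #{Q ∈ 𝒬 | ¬ cutWeight y Q < c} := by
    have := card_filter_add_card_filter_not (s := 𝒬) (fun Q => cutWeight y Q < c)
    lia
  have heavy_le : #{Q ∈ 𝒬 | ¬ cutWeight y Q < c} * c ≤ #U * c :=
    calc #{Q ∈ 𝒬 | ¬ cutWeight y Q < c} * c
        ≤ ∑ Q ∈ 𝒬 with ¬ cutWeight y Q < c, cutWeight y Q :=
          card_nsmul_le_sum _ _ _ fun Q hQ => not_lt.1 (mem_filter.1 hQ).2
      _ ≤ ∑ Q ∈ 𝒬, cutWeight y Q := sum_le_sum_of_subset (filter_subset _ _)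
      _ ≤ ∑ w ∈ U, ∑ q, y q w :=
          sum_cutWeight_le_sum H y hy U 𝒬 hdisj fun Q hQ a ha => (hclosed Q hQ a ha).2
      _ ≤ #U * c := sum_le_card_nsmul _ _ _ fun w _ => hyc w
  have := Nat.le_of_mul_le_mul_right heavy_le hc
  lia

end WeightedTutte

theorem odd_card_symmDiff {α : Type*} [DecidableEq α] (s t : Finset α) :
    Odd #(symmDiff s t) ↔ Odd (#s + #t) := by
  have hs := card_sdiff_add_card_inter s t
  have ht := card_sdiff_add_card_inter t s
  rw [symmDiff_def, sup_eq_union, card_union_of_disjoint disjoint_sdiff_sdiff, ← hs, ← ht,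
    inter_comm t s]
  grind

theorem exists_eq_disjSum_product_univ {α β ι : Type*} [Fintype ι] {Q : Finset (α ⊕ β × ι)}
    (hQ : ∀ b i j, .inr (b, i) ∈ Q → .inr (b, j) ∈ Q) :
    ∃ (A : Finset α) (K : Finset β), Q = A.disjSum (K ×ˢ univ) := by
  classical
  refine ⟨Q.toLeft, Q.toRight.image Prod.fst, ?_⟩
  ext (a | ⟨b, i⟩)
  · simp
  · simpa using ⟨fun h => ⟨i, h⟩, fun ⟨j, h⟩ => hQ b j i h⟩

/-- A graph with semi-edges, given by its darts: `origin d` is the vertex that carries the dart `d`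
and `rev` exchanges the two darts of an edge. A fixed point of `rev` is a semi-edge, which has only
one end; loops and parallel edges are allowed. -/
structure Semigraph (V D : Type*) where
  origin : D → V
  rev : D → D
  rev_rev : ∀ d, rev (rev d) = d

namespace Semigraph

/-- Exactly one dart of `S` leaves the vertex set `K`, semi-edges included. -/
def IsBridgeSide {V D : Type*} (S : Semigraph V D) (K : Finset V) : Prop :=
  ∃! d, S.origin d ∈ K ∧ (S.rev d = d ∨ S.origin (S.rev d) ∉ K)

section Regular

variable {V D : Type*} [DecidableEq V] [Fintype D]

/-- Every vertex of `S` carries exactly `r` darts. -/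
def IsRegular (S : Semigraph V D) (r : ℕ) : Prop :=
  ∀ v, #{d | S.origin d = v} = r

/-- The darts of `S` with origin in the vertex set `K`. -/
def dartsFrom (S : Semigraph V D) (K : Finset V) : Finset D :=
  {d | S.origin d ∈ K}

variable {S : Semigraph V D} {r k : ℕ}

theorem mem_dartsFrom {K : Finset V} {d : D} : d ∈ S.dartsFrom K ↔ S.origin d ∈ K := by
  simp [dartsFrom]

theorem IsRegular.card_dartsFrom (hS : S.IsRegular r) (K : Finset V) :
    #(S.dartsFrom K) = r * #K := by
  rw [dartsFrom, card_eq_sum_card_fiberwise (f := S.origin) (t := K) fun d hd => by simpa using hd,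
    sum_const_nat (m := r), mul_comm]
  intro v hv
  rw [← hS v, filter_filter]
  congr! 2 with d
  exact and_iff_right_of_imp (· ▸ hv)

theorem IsRegular.even_card_gadget [Fintype V] (hS : S.IsRegular r) (hpar : Even (r + k)) :
    Even (Fintype.card (D ⊕ V × Fin k)) := by
  have hD : Fintype.card D = r * Fintype.card V := by simpa [dartsFrom] using hS.card_dartsFrom univ
  rw [Fintype.card_sum, Fintype.card_prod, Fintype.card_fin, hD, mul_comm, ← mul_add]
  exact hpar.mul_left _

end Regular

section Gadget

variable {V D : Type*} (S : Semigraph V D) (r k : ℕ)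

/-- Tutte's reduction of `k`-factors to perfect matchings: each vertex is replaced by `k` copies,
a dart is joined to the copies of its origin and to its reverse, and the semi-edges form a clique.
The darts matched to copies of their origin are those of the factor. -/
def gadget : SimpleGraph (D ⊕ V × Fin k) where
  Adj
    | .inl d, .inl e => d ≠ e ∧ (e = S.rev d ∨ S.rev d = d ∧ S.rev e = e)
    | .inl d, .inr x => S.origin d = x.1
    | .inr x, .inl d => S.origin d = x.1
    | .inr _, .inr _ => False
  symm := ⟨by
    rintro (d | x) (e | y) h
    · exact ⟨h.1.symm, h.2.imp (fun he => by rw [he, S.rev_rev]) And.symm⟩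
    all_goals exact h⟩
  loopless := ⟨by
    rintro (d | x) h
    exacts [h.1 rfl, h]⟩

variable [DecidableEq V] [DecidableEq D]

/-- The weights on `S.gadget k` by which the gadget of an `r`-regular `S` is tested for Tutte
violators: they sum to at most `r` at every vertex. -/
def gadgetWeight : D ⊕ V × Fin k → D ⊕ V × Fin k → ℕ
  | .inl d, .inl e => if e = S.rev d ∧ e ≠ d then r - k else 0
  | .inl d, .inr x => if S.origin d = x.1 then 1 else 0
  | .inr x, .inl d => if S.origin d = x.1 then 1 else 0
  | .inr _, .inr _ => 0

theorem gadget_adj_of_gadgetWeight_ne_zero {q w : D ⊕ V × Fin k}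
    (h : S.gadgetWeight r k q w ≠ 0) : (S.gadget k).Adj q w := by
  rcases q with d | x <;> rcases w with e | y <;> simp only [gadgetWeight, gadget] at h ⊢ <;> grind

variable {S r k}

/-- The weight of the pairs separated by `Q` among those that consist of the dart `d` and a copy of
its origin. -/
def mismatch (S : Semigraph V D) (Q : Finset (D ⊕ V × Fin k)) (d : D) : ℕ :=
  if .inl d ∈ Q then #{i | .inr (S.origin d, i) ∉ Q} else #{i | .inr (S.origin d, i) ∈ Q}

variable [Fintype D]

theorem mismatch_disjSum (A : Finset D) (K : Finset V) (d : D) :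
    S.mismatch (A.disjSum (K ×ˢ (univ : Finset (Fin k)))) d =
      if d ∈ symmDiff A (S.dartsFrom K) then k else 0 := by
  by_cases hA : d ∈ A <;> by_cases hK : S.origin d ∈ K <;>
    simp [mismatch, mem_symmDiff, mem_dartsFrom, hA, hK]

theorem IsRegular.odd_card_symmDiff (hS : S.IsRegular r) (hpar : Even (r + k)) {A : Finset D}
    {K : Finset V} (hodd : Odd #(A.disjSum (K ×ˢ (univ : Finset (Fin k))))) :
    Odd #(symmDiff A (S.dartsFrom K)) := by
  rw [_root_.odd_card_symmDiff, hS.card_dartsFrom]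
  rw [card_disjSum, card_product, card_univ, Fintype.card_fin] at hodd
  have : Even ((r + k) * #K) := hpar.mul_right _
  grind

theorem isBridgeSide_of_card_symmDiff_eq_one {A : Finset D} {K : Finset V}
    (hA : ∀ d ∈ A, S.rev d ∈ A ∧ S.rev d ≠ d)
    (hAK : #(symmDiff A (S.dartsFrom K)) = 1) : S.IsBridgeSide K := by
  obtain ⟨d₀, hd₀⟩ := card_eq_one.1 hAK
  have hmem (d) : (d ∈ A ↔ S.origin d ∈ K) ↔ d ≠ d₀ := by
    rw [← not_iff_not, not_not, ← mem_singleton, ← hd₀, mem_symmDiff]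
    grind [mem_dartsFrom]
  have rev_mem (d) : S.rev d ∈ A ↔ d ∈ A :=
    ⟨fun h => S.rev_rev d ▸ (hA _ h).1, fun h => (hA d h).1⟩
  have := S.rev_rev
  by_cases hK : S.origin d₀ ∈ K
  · exact ⟨d₀, by grind, by grind⟩
  · exact ⟨S.rev d₀, by grind, by grind⟩

variable [Fintype V]

theorem IsRegular.sum_gadgetWeight_le (hS : S.IsRegular r) (hkr : k ≤ r) (w : D ⊕ V × Fin k) :
    ∑ q, S.gadgetWeight r k q w ≤ r := by
  rcases w with e | ⟨v, i⟩
  · have hdart : ∑ d, (if e = S.rev d ∧ e ≠ d then r - k else 0) ≤ r - k :=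
      calc _ ≤ ∑ d, (if d = S.rev e then r - k else 0) := by
            refine sum_le_sum fun d _ => ?_
            have := S.rev_rev d
            split_ifs <;> grind
        _ = r - k := by simp
    have hcopies : ∑ v, ∑ _i : Fin k, (if S.origin e = v then 1 else 0) = k := by simp
    simp only [Fintype.sum_sum_type, Fintype.sum_prod_type, gadgetWeight]
    lia
  · simp [Fintype.sum_sum_type, gadgetWeight, hS v]

theorem cutWeight_gadgetWeight (Q : Finset (D ⊕ V × Fin k)) :
    cutWeight (S.gadgetWeight r k) Q =
      ∑ d, S.mismatch Q d + #{d | .inl d ∈ Q ∧ .inl (S.rev d) ∉ Q} * (r - k) := by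
  have hcopies (d) : S.mismatch Q d =
      ∑ x : V × Fin k, ((if .inl d ∈ Q ∧ .inr x ∉ Q then if S.origin d = x.1 then 1 else 0 else 0) +
        if .inr x ∈ Q ∧ .inl d ∉ Q then if S.origin d = x.1 then 1 else 0 else 0) := by
    rw [Fintype.sum_prod_type, sum_eq_single (S.origin d)]
    · unfold mismatch
      split_ifs <;> simp [*, card_filter, -sum_boole]
    · intro v _ hv
      simp [hv.symm]
    · simp
  have hdarts (d) : (∑ e, if .inl d ∈ Q ∧ .inl e ∉ Q then
      if e = S.rev d ∧ e ≠ d then r - k else 0 else 0) =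
        if .inl d ∈ Q ∧ .inl (S.rev d) ∉ Q then r - k else 0 := by
    rw [sum_eq_single (S.rev d)] <;> grind
  simp only [cutWeight_eq_sum_ite, Fintype.sum_sum_type, gadgetWeight, sum_add_distrib, hdarts,
    hcopies, card_filter, sum_mul, ite_mul, one_mul, zero_mul, ite_self, sum_const_zero, add_zero]
  rw [sum_comm (s := (univ : Finset (V × Fin k)))]
  ring

theorem IsRegular.le_cutWeight_of_split (hS : S.IsRegular r) {Q : Finset (D ⊕ V × Fin k)} {v : V}
    {i j : Fin k} (hi : .inr (v, i) ∈ Q) (hj : .inr (v, j) ∉ Q) :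
    r ≤ cutWeight (S.gadgetWeight r k) Q := by
  have one_le (d) (hd : S.origin d = v) : 1 ≤ S.mismatch Q d := by
    subst hd
    unfold mismatch
    split_ifs
    exacts [card_pos.2 ⟨j, by simpa using hj⟩, card_pos.2 ⟨i, by simpa using hi⟩]
  calc r = ∑ d with S.origin d = v, 1 := by rw [sum_const, hS v, smul_eq_mul, mul_one]
    _ ≤ ∑ d with S.origin d = v, S.mismatch Q d :=
        sum_le_sum fun d hd => one_le d (mem_filter.1 hd).2
    _ ≤ ∑ d, S.mismatch Q d := sum_le_sum_of_subset (filter_subset _ _)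
    _ ≤ _ := cutWeight_gadgetWeight (S := S) (r := r) Q ▸ Nat.le_add_right _ _

theorem cutWeight_disjSum (A : Finset D) (K : Finset V) :
    cutWeight (S.gadgetWeight r k) (A.disjSum (K ×ˢ univ)) =
      #(symmDiff A (S.dartsFrom K)) * k + #{d ∈ A | S.rev d ∉ A} * (r - k) := by
  rw [cutWeight_gadgetWeight]
  simp only [mismatch_disjSum, ← sum_filter, filter_univ_mem, sum_const, smul_eq_mul,
    inl_mem_disjSum, filter_and, inter_filter, inter_univ]

theorem IsRegular.mem_of_cutWeight_lt (hS : S.IsRegular r) (hr : r ≤ 3 * k)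
    (hpar : Even (r + k)) (hS1 : ∀ K, S.IsBridgeSide K → K = univ)
    {Q : Finset (D ⊕ V × Fin k)} (hodd : Odd #Q) (hlt : cutWeight (S.gadgetWeight r k) Q < r) :
    (∃ d, S.rev d = d ∧ .inl d ∈ Q) ∨ ∀ x, .inr x ∈ Q := by
  obtain ⟨A, K, rfl⟩ := exists_eq_disjSum_product_univ fun v i j hi =>
    not_not.1 fun hj => hlt.not_ge (hS.le_cutWeight_of_split hi hj)
  rw [cutWeight_disjSum] at hlt
  by_contra! hQ
  obtain ⟨hsemi, ⟨v, i⟩, hvK⟩ := hQ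
  simp only [inl_mem_disjSum, inr_mem_disjSum, mem_product, mem_univ, and_true] at hsemi hvK
  have hone : #(symmDiff A (S.dartsFrom K)) = 1 := by
    by_contra hne
    obtain ⟨m, hm⟩ := hS.odd_card_symmDiff hpar hodd
    have : 3 * k ≤ #(symmDiff A (S.dartsFrom K)) * k := Nat.mul_le_mul_right k (by lia)
    lia
  have hclosed : ∀ d ∈ A, S.rev d ∈ A := by
    by_contra! ⟨d, hd, hdA⟩
    have : 1 * (r - k) ≤ #{d ∈ A | S.rev d ∉ A} * (r - k) :=
      Nat.mul_le_mul_right _ (card_pos.2 ⟨d, mem_filter.2 ⟨hd, hdA⟩⟩)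
    lia
  have hK : S.IsBridgeSide K :=
    isBridgeSide_of_card_symmDiff_eq_one (fun d hd => ⟨hclosed d hd, (hsemi d · hd)⟩) hone
  exact hvK (hS1 K hK ▸ mem_univ v)

end Gadget

section Factor

variable {V D : Type*} [DecidableEq V] {S : Semigraph V D} {r k : ℕ}

/-- The set of darts `Δ` is a `k`-factor of `S`: it consists of whole edges and semi-edges, and
every vertex carries exactly `k` of its darts. -/
structure IsFactor (S : Semigraph V D) (k : ℕ) (Δ : Finset D) : Prop where
  rev_mem : ∀ d ∈ Δ, S.rev d ∈ Δ
  card_origin_eq : ∀ v, #{d ∈ Δ | S.origin d = v} = k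

theorem IsRegular.exists_isPerfectMatching_gadget [Fintype V] [Fintype D] (hS : S.IsRegular r)
    (hk : 0 < k) (hkr : k ≤ r) (hr : r ≤ 3 * k) (hpar : Even (r + k))
    (hS1 : ∀ K, S.IsBridgeSide K → K = univ) :
    ∃ M : (S.gadget k).Subgraph, M.IsPerfectMatching := by
  classical
  refine exists_isPerfectMatching_of_cutWeight _ (S.gadgetWeight r k) (hk.trans_le hkr)
    (fun q w => S.gadget_adj_of_gadgetWeight_ne_zero r k) (hS.sum_gadgetWeight_le hkr)
    (hS.even_card_gadget hpar) fun Q Q' hdisj hodd hodd' hlt hlt' => ?_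
  rcases hS.mem_of_cutWeight_lt hr hpar hS1 hodd hlt with ⟨d, hd, hdQ⟩ | hQ <;>
    rcases hS.mem_of_cutWeight_lt hr hpar hS1 hodd' hlt' with ⟨e, he, heQ⟩ | hQ'
  · have hde : d ≠ e := by
      rintro rfl
      exact Finset.disjoint_left.1 hdisj hdQ heQ
    exact ⟨.inl d, hdQ, .inl e, heQ, hde, .inr ⟨hd, he⟩⟩
  · exact ⟨.inl d, hdQ, .inr (S.origin d, ⟨0, hk⟩), hQ' _, rfl⟩
  · exact ⟨.inr (S.origin e, ⟨0, hk⟩), hQ _, .inl e, heQ, rfl⟩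
  · obtain ⟨x⟩ : Nonempty (V × Fin k) := by
      obtain ⟨d | x, -⟩ := card_pos.1 hodd.pos
      exacts [⟨S.origin d, ⟨0, hk⟩⟩, ⟨x⟩]
    exact (Finset.disjoint_left.1 hdisj (hQ x) (hQ' x)).elim

theorem exists_isFactor_of_isPerfectMatching [Finite D] {M : (S.gadget k).Subgraph}
    (hM : M.IsPerfectMatching) : ∃ Δ, S.IsFactor k Δ := by
  classical
  have := Fintype.ofFinite D
  rw [Subgraph.isPerfectMatching_iff] at hM
  have eq_of_adj {q w w'} (h : M.Adj q w) (h' : M.Adj q w') : w = w' := (hM q).unique h h'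
  have exists_dart (x) : ∃ d, M.Adj (.inr x) (.inl d) := by
    obtain ⟨d | y, h⟩ := (hM (.inr x)).exists
    exacts [⟨d, h⟩, (M.adj_sub h).elim]
  choose dart hdart using exists_dart
  have dart_injective : Function.Injective dart := fun x y h =>
    Sum.inr_injective (eq_of_adj (hdart x).symm (h ▸ (hdart y).symm))
  have origin_dart (x) : S.origin (dart x) = x.1 := M.adj_sub (hdart x)
  let Δ : Finset D := {d | ∃ x, M.Adj (.inl d) (.inr x)}
  have mem_Δ (d) : d ∈ Δ ↔ ∃ x, M.Adj (.inl d) (.inr x) := mem_filter_univ d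
  refine ⟨Δ, fun d hd => ?_, fun v => ?_⟩
  · obtain ⟨x, hx⟩ := (mem_Δ d).1 hd
    rw [mem_Δ]
    obtain ⟨e | y, hy⟩ := (hM (.inl (S.rev d))).exists
    · have hadj : S.rev d ≠ e ∧ (e = S.rev (S.rev d) ∨ S.rev (S.rev d) = S.rev d ∧ S.rev e = e) :=
        M.adj_sub hy
      rw [S.rev_rev] at hadj
      rcases hadj.2 with rfl | ⟨hd, -⟩
      · cases eq_of_adj hx hy.symm
      · exact ⟨x, hd ▸ hx⟩
    · exact ⟨y, hy⟩
  · have : {d ∈ Δ | S.origin d = v} = univ.image (dart ∘ Prod.mk v) := by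
      ext d
      simp only [mem_filter, mem_Δ, mem_univ, true_and, mem_image, Function.comp_apply]
      constructor
      · rintro ⟨⟨x, hx⟩, rfl⟩
        have hxd : dart x = d := Sum.inl_injective (eq_of_adj (hdart x) hx.symm)
        exact ⟨x.2, by rw [← hxd, origin_dart]⟩
      · rintro ⟨i, rfl⟩
        exact ⟨⟨(v, i), (hdart _).symm⟩, origin_dart _⟩
    rw [this, card_image_of_injective _ (dart_injective.comp (Prod.mk_right_injective v)),
      card_univ, Fintype.card_fin]

theorem IsRegular.exists_isFactor [Fintype V] [Fintype D] (hS : S.IsRegular r)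
    (hk : 0 < k) (hkr : k ≤ r) (hr : r ≤ 3 * k) (hpar : Even (r + k))
    (hS1 : ∀ K, S.IsBridgeSide K → K = univ) : ∃ Δ, S.IsFactor k Δ := by
  classical
  obtain ⟨_, hM⟩ := hS.exists_isPerfectMatching_gadget hk hkr hr hpar hS1
  exact exists_isFactor_of_isPerfectMatching hM

end Factor

end Semigraph

section Regions

variable {V : Type*}

/-- Exactly one edge of `G` leaves the vertex set `K`. -/
def IsBridgeSide (G : SimpleGraph V) (K : Finset V) : Prop :=
  ∃! d : G.Dart, d.fst ∈ K ∧ d.snd ∉ K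

/-- The neighbourhoods `δ u`, `u ∈ R`, form a `k`-factor of the part of `G` that meets the vertex
set `R`. An edge leaving `R` may be used at its end in `R`, whatever `δ` says at the other end. -/
structure IsFactorOn (G : SimpleGraph V) (k : ℕ) (R : Finset V) (δ : V → Finset V) : Prop where
  adj : ∀ u ∈ R, ∀ v ∈ δ u, G.Adj u v
  mem_symm : ∀ u ∈ R, ∀ v ∈ R, v ∈ δ u → u ∈ δ v
  card_eq : ∀ u ∈ R, #(δ u) = k

variable {G : SimpleGraph V} {r k : ℕ} {R : Finset V} {δ : V → Finset V}

theorem IsFactorOn.even_sum_card_filter_mem [DecidableEq V] (hδ : IsFactorOn G k R δ) :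
    Even (∑ u ∈ R, #{v ∈ δ u | v ∈ R}) := by
  let H : SimpleGraph R :=
    { Adj := fun u v => v.1 ∈ δ u
      symm := ⟨fun u v => hδ.mem_symm u u.2 v v.2⟩
      loopless := ⟨fun u hu => G.irrefl (hδ.adj u u.2 u hu)⟩ }
  have : DecidableRel H.Adj := fun u v => inferInstanceAs (Decidable (v.1 ∈ δ u))
  have hdegree (u : R) : #{v ∈ δ u | v ∈ R} = H.degree u := by
    rw [← card_neighborFinset_eq_degree, ← card_map (Function.Embedding.subtype _)]
    congr 1
    ext v
    simp [H, and_comm]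
  rw [← sum_coe_sort, sum_congr rfl fun u _ => hdegree u, H.sum_degrees_eq_twice_card_edges]
  exact even_two_mul _

theorem IsFactorOn.even_mul_card_add [DecidableEq V] (hδ : IsFactorOn G k R δ) :
    Even (k * #R + ∑ u ∈ R, #{v ∈ δ u | v ∉ R}) := by
  have hsum : k * #R = ∑ u ∈ R, #{v ∈ δ u | v ∈ R} + ∑ u ∈ R, #{v ∈ δ u | v ∉ R} := by
    rw [← sum_add_distrib, mul_comm, ← smul_eq_mul, ← sum_const]
    exact sum_congr rfl fun u hu => by rw [card_filter_add_card_filter_not, hδ.card_eq u hu]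
  rw [hsum, add_assoc]
  exact hδ.even_sum_card_filter_mem.add (Even.add_self _)

/-- The part of `G` that meets the vertex set `R`: an edge of `G` leaving `R` becomes a
semi-edge. -/
def semigraphOn [DecidableEq V] (G : SimpleGraph V) (R : Finset V) :
    Semigraph R {d : G.Dart // d.fst ∈ R} where
  origin d := ⟨d.1.fst, d.2⟩
  rev d := if h : d.1.snd ∈ R then ⟨d.1.symm, h⟩ else d
  rev_rev d := by
    by_cases h : d.1.snd ∈ R
    · simp only [dif_pos h]
      exact (dif_pos d.2).trans (Subtype.ext d.1.symm_symm)
    · simp only [dif_neg h]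

theorem isBridgeSide_map_of_semigraphOn [DecidableEq V] {K : Finset R}
    (hK : (semigraphOn G R).IsBridgeSide K) :
    IsBridgeSide G (K.map (Function.Embedding.subtype _)) := by
  have leaves_iff (d : {d : G.Dart // d.fst ∈ R}) :
      ((semigraphOn G R).rev d = d ∨ (semigraphOn G R).origin ((semigraphOn G R).rev d) ∉ K) ↔
        d.1.snd ∉ K.map (Function.Embedding.subtype _) := by
    by_cases h : d.1.snd ∈ R
    · simp [semigraphOn, h, Subtype.ext_iff, d.1.symm_ne]
    · simp [semigraphOn, h]
  have origin_mem_iff (d : {d : G.Dart // d.fst ∈ R}) :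
      (semigraphOn G R).origin d ∈ K ↔ d.1.fst ∈ K.map (Function.Embedding.subtype _) := by
    simp [semigraphOn, d.2]
  simp only [Semigraph.IsBridgeSide, leaves_iff] at hK
  simp only [origin_mem_iff] at hK
  obtain ⟨d, hd, hunique⟩ := hK
  refine ⟨d.1, hd, fun e he => ?_⟩
  have heR : e.fst ∈ R := property_of_mem_map_subtype K he.1
  exact congrArg Subtype.val (hunique ⟨e, heR⟩ he)

theorem isFactorOn_of_isFactor_semigraphOn [DecidableEq V] {Δ : Finset {d : G.Dart // d.fst ∈ R}}
    (hΔ : (semigraphOn G R).IsFactor k Δ) :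
    IsFactorOn G k R fun u => {d ∈ Δ | d.1.fst = u}.image fun d => d.1.snd where
  adj u _ v hv := by
    simp only [mem_image, mem_filter] at hv
    obtain ⟨d, ⟨-, rfl⟩, rfl⟩ := hv
    exact d.1.adj
  mem_symm u hu v hv huv := by
    simp only [mem_image, mem_filter] at huv ⊢
    obtain ⟨d, ⟨hd, rfl⟩, rfl⟩ := huv
    have hrev : (semigraphOn G R).rev d = ⟨d.1.symm, hv⟩ := dif_pos hv
    exact ⟨_, ⟨hrev ▸ hΔ.rev_mem d hd, rfl⟩, rfl⟩
  card_eq u hu := by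
    rw [card_image_of_injOn, ← hΔ.card_origin_eq ⟨u, hu⟩]
    · simp only [semigraphOn, Subtype.mk.injEq]
    · intro d hd e he hde
      simp only [coe_filter, Set.mem_ofPred_eq] at hd he
      exact Subtype.ext (Dart.ext _ _ (Prod.ext (hd.2.trans he.2.symm) hde))

variable [Fintype V] [DecidableRel G.Adj]

theorem isFactorOn_neighborFinset (hG : G.IsRegularOfDegree r) :
    IsFactorOn G r R (fun u => G.neighborFinset u) where
  adj := by simp
  mem_symm := by simp [G.adj_comm]
  card_eq u _ := hG u

-- `k * #R` and `r * #R` have the same parity, hence so have the numbers of edges that leave `R`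
-- inside the factor and in all of `G`.
theorem IsFactorOn.mem_of_isBridgeSide (hδ : IsFactorOn G k R δ) (hG : G.IsRegularOfDegree r)
    (hpar : Even (r + k)) (hR : IsBridgeSide G R) {a b : V} (ha : a ∈ R) (hb : b ∉ R)
    (hab : G.Adj a b) : b ∈ δ a := by
  classical
  obtain ⟨d, -, hunique⟩ := hR
  have exit_unique {u v} (hu : u ∈ R) (hv : v ∉ R) (huv : G.Adj u v) : u = a ∧ v = b := by
    have := (hunique ⟨(u, v), huv⟩ ⟨hu, hv⟩).trans (hunique ⟨(a, b), hab⟩ ⟨ha, hb⟩).symm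
    simpa using congrArg Dart.toProd this
  have hG_exits : ∑ u ∈ R, #{v ∈ G.neighborFinset u | v ∉ R} = 1 := by
    rw [← card_sigma, card_eq_one]
    refine ⟨⟨a, b⟩, ?_⟩
    ext ⟨u, v⟩
    simp only [mem_sigma, mem_filter, mem_neighborFinset, mem_singleton, Sigma.mk.injEq, heq_eq_eq]
    grind
  by_contra hba
  have hδ_exits : ∑ u ∈ R, #{v ∈ δ u | v ∉ R} = 0 := by
    refine sum_eq_zero fun u hu => card_eq_zero.2 (filter_eq_empty_iff.2 fun v hv hvR => hba ?_)
    obtain ⟨rfl, rfl⟩ := exit_unique hu hvR (hδ.adj u hu v hv)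
    exact hv
  have hδ_even := hδ.even_mul_card_add
  have hG_even := (isFactorOn_neighborFinset hG (R := R)).even_mul_card_add
  have : Even ((r + k) * #R) := hpar.mul_right _
  grind

theorem isRegular_semigraphOn [DecidableEq V] (hG : G.IsRegularOfDegree r) (R : Finset V) :
    (semigraphOn G R).IsRegular r := by
  intro u
  rw [← hG u, ← G.dart_fst_fiber_card_eq_degree, ← card_map (Function.Embedding.subtype _)]
  congr 1
  ext d
  simp only [semigraphOn, mem_map, Function.Embedding.subtype_apply, Subtype.exists,
    exists_and_right, exists_eq_right, mem_filter, mem_univ, true_and]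
  grind

theorem exists_isFactorOn (hG : G.IsRegularOfDegree r) (hk : 0 < k) (hkr : k ≤ r)
    (hr : r ≤ 3 * k) (hpar : Even (r + k)) (hR : ∀ K ⊂ R, ¬ IsBridgeSide G K) :
    ∃ δ, IsFactorOn G k R δ := by
  classical
  have eq_univ (K : Finset R) (hK : (semigraphOn G R).IsBridgeSide K) : K = univ := by
    by_contra hne
    refine hR _ ?_ (isBridgeSide_map_of_semigraphOn hK)
    calc K.map (Function.Embedding.subtype _) ⊂ univ.map (Function.Embedding.subtype (· ∈ R)) :=
          map_ssubset_map.2 (ssubset_univ_iff.2 hne)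
      _ = R := attach_map_val
  obtain ⟨Δ, hΔ⟩ := (isRegular_semigraphOn hG R).exists_isFactor hk hkr hr hpar eq_univ
  exact ⟨_, isFactorOn_of_isFactor_semigraphOn hΔ⟩

end Regions

theorem exists_finpartition_minimal_or_eq {α : Type*} [DecidableEq α] {p : Finset α → Prop}
    (hp : ¬ p ∅) (s : Finset α) : ∃ (P : Finpartition s) (core : Finset α),
      ∀ R ∈ P.parts, Minimal p R ∨ R = core ∧ ∀ K ⊆ R, ¬ p K := by
  induction s using Finset.strongInduction with
  | H s ih =>
  by_cases hs : ∃ K ⊆ s, p K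
  · obtain ⟨K, hKs, hK⟩ := hs
    obtain ⟨M, hMK, hM⟩ := exists_minimal_le_of_wellFoundedLT p K hK
    have hMs : M ⊆ s := hMK.trans hKs
    have hM0 : M ≠ ∅ := fun h => hp (h ▸ hM.prop)
    obtain ⟨P, core, hP⟩ := ih (s \ M) (sdiff_ssubset hMs (nonempty_iff_ne_empty.2 hM0))
    refine ⟨P.extend hM0 sdiff_disjoint (sdiff_union_of_subset hMs), core, fun R hR => ?_⟩
    rcases mem_insert.1 hR with rfl | hR
    exacts [.inl hM, hP R hR]
  · push Not at hs
    rcases eq_or_ne s ∅ with rfl | hs0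
    · exact ⟨Finpartition.empty _, ∅, by simp⟩
    · refine ⟨Finpartition.indiscrete hs0, s, fun R hR => .inr ?_⟩
      obtain rfl : R = s := by simpa using hR
      exact ⟨rfl, hs⟩

section BridgePartition

variable {V : Type*} [Fintype V] [DecidableEq V]

/-- The `k`-factors on the parts of `P` combine to `δ`, and exactly one edge leaves each part
different from `core`. The two ends of an edge between two parts may disagree on whether the edge
is in `δ`. -/
structure IsBridgePartition (G : SimpleGraph V) (k : ℕ) (P : Finpartition (univ : Finset V))
    (core : Finset V) (δ : V → Finset V) : Prop where
  isFactorOn : ∀ u, IsFactorOn G k (P.part u) δ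
  isBridgeSide : ∀ u, P.part u ≠ core → IsBridgeSide G (P.part u)

/-- The edge leaving the part of `u` is not in `δ` at its far end. -/
def IsFlipped (G : SimpleGraph V) (P : Finpartition (univ : Finset V)) (core : Finset V)
    (δ : V → Finset V) (u : V) : Prop :=
  P.part u ≠ core ∧ ∃ a ∈ P.part u, ∃ b ∉ P.part u, G.Adj a b ∧ a ∉ δ b

/-- The graph obtained from `δ` by complementing it within the flipped parts. -/
def glue (G : SimpleGraph V) (P : Finpartition (univ : Finset V)) (core : Finset V)
    (δ : V → Finset V) : SimpleGraph V where
  Adj u v :=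
    G.Adj u v ∧ (v ∈ δ u ↔ ¬ IsFlipped G P core δ u) ∧ (u ∈ δ v ↔ ¬ IsFlipped G P core δ v)
  symm := ⟨fun _ _ h => ⟨h.1.symm, h.2.2, h.2.1⟩⟩
  loopless := ⟨fun _ h => G.irrefl h.1⟩

variable {G : SimpleGraph V} {r k : ℕ} {P : Finpartition (univ : Finset V)} {core : Finset V}
  {δ : V → Finset V}

theorem isFlipped_congr {u v : V} (huv : P.part u = P.part v) :
    IsFlipped G P core δ u ↔ IsFlipped G P core δ v := by
  rw [IsFlipped, IsFlipped, huv]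

theorem IsBridgePartition.isFlipped_iff_notMem (hP : IsBridgePartition G k P core δ) {u v : V}
    (huv : G.Adj u v) (hv : v ∉ P.part u) (hu : P.part u ≠ core) :
    IsFlipped G P core δ u ↔ u ∉ δ v := by
  refine ⟨?_, fun h => ⟨hu, u, P.mem_part (mem_univ u), v, hv, huv, h⟩⟩
  rintro ⟨-, a, ha, b, hb, hab, hδ⟩
  have heq : (⟨(u, v), huv⟩ : G.Dart) = ⟨(a, b), hab⟩ :=
    (hP.isBridgeSide u hu).unique ⟨P.mem_part (mem_univ u), hv⟩ ⟨ha, hb⟩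
  grind

variable [DecidableRel G.Adj]

theorem exists_isBridgePartition (hG : G.IsRegularOfDegree r) (hk : 0 < k) (hkr : k ≤ r)
    (hr : r ≤ 3 * k) (hpar : Even (r + k)) : ∃ P core δ, IsBridgePartition G k P core δ := by
  have hempty : ¬ IsBridgeSide G ∅ := fun ⟨_, ⟨h, _⟩, _⟩ => notMem_empty _ h
  obtain ⟨P, core, hP⟩ := exists_finpartition_minimal_or_eq hempty univ
  have exists_factor (R) (hR : R ∈ P.parts) : ∃ δ, IsFactorOn G k R δ := by
    refine exists_isFactorOn hG hk hkr hr hpar fun K hK => ?_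
    rcases hP R hR with hmin | ⟨-, hcore⟩
    exacts [hmin.not_prop_of_lt hK, hcore K hK.subset]
  choose! δ hδ using exists_factor
  have part_mem (u) : P.part u ∈ P.parts := P.part_mem.2 (mem_univ u)
  refine ⟨P, core, fun u => δ (P.part u) u, fun u => ?_, fun u hu => ?_⟩
  · have hδu := hδ _ (part_mem u)
    have part_eq {v} (hv : v ∈ P.part u) : P.part v = P.part u := P.part_eq_of_mem (part_mem u) hv
    refine ⟨fun v hv w hw => ?_, fun v hv w hw hvw => ?_, fun v hv => ?_⟩
    · exact hδu.adj v hv w (part_eq hv ▸ hw)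
    · rw [part_eq hv] at hvw
      rw [part_eq hw]
      exact hδu.mem_symm v hv w hw hvw
    · rw [part_eq hv]
      exact hδu.card_eq v hv
  · exact (hP _ (part_mem u)).elim Minimal.prop fun hcore => (hu hcore.1).elim

namespace IsBridgePartition

theorem mem_of_part_ne_core (hP : IsBridgePartition G k P core δ) (hG : G.IsRegularOfDegree r)
    (hpar : Even (r + k)) {u v : V} (huv : G.Adj u v) (hv : v ∉ P.part u)
    (hu : P.part u ≠ core) : v ∈ δ u :=
  (hP.isFactorOn u).mem_of_isBridgeSide hG hpar (hP.isBridgeSide u hu)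
    (P.mem_part (mem_univ u)) hv huv

theorem mem_iff_not_isFlipped_iff (hP : IsBridgePartition G k P core δ)
    (hG : G.IsRegularOfDegree r) (hpar : Even (r + k)) {u v : V} (huv : G.Adj u v)
    (hne : P.part u ≠ P.part v) :
    (v ∈ δ u ↔ ¬ IsFlipped G P core δ u) ↔ v ∈ δ u ∧ u ∈ δ v := by
  have notMem_part {a b} (h : P.part a ≠ P.part b) : b ∉ P.part a := fun hb =>
    h (P.part_eq_of_mem (P.part_mem.2 (mem_univ a)) hb).symm
  by_cases hu : P.part u = core
  · have hflip : ¬ IsFlipped G P core δ u := fun h => h.1 hu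
    have huv' : u ∈ δ v :=
      hP.mem_of_part_ne_core hG hpar huv.symm (notMem_part hne.symm) (hu ▸ hne.symm)
    tauto
  · have hvu := hP.mem_of_part_ne_core hG hpar huv (notMem_part hne) hu
    have hflip := hP.isFlipped_iff_notMem huv (notMem_part hne) hu
    tauto

theorem glue_adj_iff (hP : IsBridgePartition G k P core δ) (hG : G.IsRegularOfDegree r)
    (hpar : Even (r + k)) {u v : V} :
    (glue G P core δ).Adj u v ↔ G.Adj u v ∧ (v ∈ δ u ↔ ¬ IsFlipped G P core δ u) := by
  refine and_congr_right fun huv => and_iff_left_of_imp fun h => ?_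
  by_cases hpart : P.part u = P.part v
  · have hv : v ∈ P.part u := hpart ▸ P.mem_part (mem_univ v)
    have hu := P.mem_part (mem_univ u)
    rw [← isFlipped_congr hpart, ← h]
    exact ⟨(hP.isFactorOn u).mem_symm v hv u hu, (hP.isFactorOn u).mem_symm u hu v hv⟩
  · rw [hP.mem_iff_not_isFlipped_iff hG hpar huv hpart] at h
    exact (hP.mem_iff_not_isFlipped_iff hG hpar huv.symm (Ne.symm hpart)).2 h.symm

theorem isFlipped_iff_of_glue_adj (hP : IsBridgePartition G k P core δ)
    (hG : G.IsRegularOfDegree r) (hpar : Even (r + k)) {u v : V}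
    (huv : (glue G P core δ).Adj u v) : IsFlipped G P core δ u ↔ IsFlipped G P core δ v := by
  by_cases hpart : P.part u = P.part v
  · exact isFlipped_congr hpart
  · obtain ⟨hG_adj, hu, hv⟩ := huv
    have := (hP.mem_iff_not_isFlipped_iff hG hpar hG_adj hpart).1 hu
    tauto

theorem degree_glue (hP : IsBridgePartition G k P core δ) (hG : G.IsRegularOfDegree r)
    (hpar : Even (r + k)) [DecidableRel (glue G P core δ).Adj] (u : V)
    [Decidable (IsFlipped G P core δ u)] :
    (glue G P core δ).degree u = if IsFlipped G P core δ u then r - k else k := by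
  have hu := P.mem_part (mem_univ u)
  have hδ : δ u ⊆ G.neighborFinset u := fun v hv =>
    (G.mem_neighborFinset u v).2 ((hP.isFactorOn u).adj u hu v hv)
  have hcard : #(δ u) = k := (hP.isFactorOn u).card_eq u hu
  split_ifs with hflip
  · rw [← hG u, ← hcard, ← card_neighborFinset_eq_degree, ← card_neighborFinset_eq_degree,
      ← card_sdiff_of_subset hδ]
    congr 1
    ext v
    simp [hP.glue_adj_iff hG hpar, hflip]
  · rw [← hcard, ← card_neighborFinset_eq_degree]
    congr 1
    ext v
    simpa [hP.glue_adj_iff hG hpar, hflip] using (hP.isFactorOn u).adj u hu v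

end IsBridgePartition

end BridgePartition

theorem exists_le_degree_eq_of_adj {V : Type*} [Fintype V] {G : SimpleGraph V}
    [DecidableRel G.Adj] {r k : ℕ} (hG : G.IsRegularOfDegree r) (hk : 0 < k) (hkr : k ≤ r)
    (hr : r ≤ 3 * k) (hpar : Even (r + k)) :
    ∃ (N : SimpleGraph V) (_ : DecidableRel N.Adj), N ≤ G ∧
      (∀ u v, N.Adj u v → N.degree u = N.degree v) ∧ ∀ u, N.degree u = k ∨ N.degree u = r - k := by
  classical
  obtain ⟨P, core, δ, hP⟩ := exists_isBridgePartition hG hk hkr hr hpar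
  refine ⟨glue G P core δ, inferInstance, fun u v huv => huv.1, fun u v huv => ?_, fun u => ?_⟩
  · simp only [hP.degree_glue hG hpar, hP.isFlipped_iff_of_glue_adj hG hpar huv]
  · rw [hP.degree_glue hG hpar]
    exact (ite_eq_or_eq _ _ _).symm

theorem exists_perm_adj {V : Type*} [Fintype V] (N : SimpleGraph V) [DecidableRel N.Adj]
    (hpos : ∀ v, 0 < N.degree v) (hdeg : ∀ u v, N.Adj u v → N.degree u = N.degree v) :
    ∃ σ : Equiv.Perm V, ∀ v, N.Adj v (σ v) := by
  classical
  have sum_inv (u) : ∑ _v ∈ N.neighborFinset u, (N.degree u : ℚ)⁻¹ = 1 := by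
    rw [sum_const, card_neighborFinset_eq_degree, nsmul_eq_mul,
      mul_inv_cancel₀ (Nat.cast_ne_zero.2 (hpos u).ne')]
  have hall (s : Finset V) : #s ≤ #(s.biUnion fun u => N.neighborFinset u) := by
    set t := s.biUnion fun u => N.neighborFinset u
    have : (#s : ℚ) ≤ #t :=
      calc (#s : ℚ) = ∑ u ∈ s, ∑ _v ∈ N.neighborFinset u, (N.degree u : ℚ)⁻¹ := by simp [sum_inv]
        _ = ∑ u ∈ s, ∑ v ∈ N.neighborFinset u, (N.degree v : ℚ)⁻¹ :=
            sum_congr rfl fun u _ => sum_congr rfl fun v hv => by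
              rw [hdeg u v ((N.mem_neighborFinset u v).1 hv)]
        _ = ∑ v ∈ t, ∑ u ∈ s with N.Adj v u, (N.degree v : ℚ)⁻¹ :=
            sum_comm' fun u v => by
              simp only [t, mem_filter, mem_biUnion, mem_neighborFinset, N.adj_comm v u]
              grind
        _ ≤ ∑ v ∈ t, ∑ _u ∈ N.neighborFinset v, (N.degree v : ℚ)⁻¹ := by
            gcongr with v
            intro u hu
            exact (N.mem_neighborFinset v u).2 (mem_filter.1 hu).2
        _ = #t := by simp [sum_inv]
    exact_mod_cast this
  obtain ⟨f, hf, hadj⟩ := (all_card_le_biUnion_card_iff_exists_injective _).1 hall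
  exact ⟨.ofBijective f (Finite.injective_iff_bijective.1 hf), fun v =>
    (N.mem_neighborFinset v _).1 (hadj v)⟩

theorem sum_incidenceFinset {V M : Type*} [Fintype V] [DecidableEq V] [AddCommMonoid M]
    (G : SimpleGraph V) [DecidableRel G.Adj] (f : Sym2 V → M) (v : V) :
    ∑ e ∈ G.incidenceFinset v, f e = ∑ w ∈ G.neighborFinset v, f s(v, w) := by
  have himage : G.incidenceFinset v = (G.neighborFinset v).image (s(v, ·)) := by
    ext e
    induction e with
    | h a b =>
      simp only [mem_incidenceFinset, mk'_mem_incidenceSet_iff, mem_image, mem_neighborFinset]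
      grind [G.adj_comm]
  rw [himage, sum_image fun a _ b _ h => Sym2.congr_right.1 h]

section Flow

variable {V : Type*} [DecidableEq V] {G N : SimpleGraph V} [DecidableRel N.Adj]
  [N.LocallyFinite] {σ : Equiv.Perm V}

/-- The value on the pair `u, v` of the flow on a 7-regular graph built from a subgraph `N` whose
degrees are 3 and 4 and from a permutation `σ` moving every vertex along an edge of `N`. Outside `N`
the flow is 2. On an edge of `N` it is `a - 5`, where `a` is the degree of both ends, reduced by 1
for each end that `σ` moves to the other, so that the sum at a vertex is
`2 * (7 - a) - a * (5 - a) - 2 = (a - 3) * (a - 4)`. -/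
def flowValue (N : SimpleGraph V) [DecidableRel N.Adj] [N.LocallyFinite] (σ : Equiv.Perm V)
    (u v : V) : ℤ :=
  if N.Adj u v then N.degree u - 5 - (if σ u = v then 1 else 0) - (if σ v = u then 1 else 0) else 2

theorem flowValue_comm (hdeg : ∀ u v, N.Adj u v → N.degree u = N.degree v) (u v : V) :
    flowValue N σ u v = flowValue N σ v u := by
  by_cases h : N.Adj u v
  · rw [flowValue, flowValue, if_pos h, if_pos h.symm, hdeg u v h, sub_right_comm]
  · rw [flowValue, flowValue, if_neg h, if_neg (mt Adj.symm h)]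

theorem flowValue_ne_zero_and_natAbs_le {u v : V} (hu : N.degree u = 3 ∨ N.degree u = 4) :
    flowValue N σ u v ≠ 0 ∧ (flowValue N σ u v).natAbs ≤ 4 := by
  unfold flowValue
  split_ifs <;> lia

theorem sum_flowValue [Fintype V] [DecidableRel G.Adj] (hG : G.IsRegularOfDegree 7) (hN : N ≤ G)
    (hσ : ∀ v, N.Adj v (σ v)) {v : V} (hv : N.degree v = 3 ∨ N.degree v = 4) :
    ∑ w ∈ G.neighborFinset v, flowValue N σ v w = 0 := by
  have hadj : {w ∈ G.neighborFinset v | N.Adj v w} = N.neighborFinset v := by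
    ext w
    simpa using @hN v w
  have hout : ∑ w ∈ N.neighborFinset v, (if σ v = w then (1 : ℤ) else 0) = 1 := by
    simp [hσ v]
  have hin : ∑ w ∈ N.neighborFinset v, (if σ w = v then (1 : ℤ) else 0) = 1 := by
    have : N.Adj v (σ.symm v) := by simpa using (hσ (σ.symm v)).symm
    simp [← Equiv.eq_symm_apply, this]
  have hcompl : #{w ∈ G.neighborFinset v | ¬ N.Adj v w} + N.degree v = 7 := by
    rw [← card_neighborFinset_eq_degree, ← hadj, add_comm, card_filter_add_card_filter_not]
    exact hG v
  simp only [flowValue]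
  rw [sum_ite, hadj, sum_sub_distrib, sum_sub_distrib, hout, hin, sum_const, sum_const,
    card_neighborFinset_eq_degree]
  rcases hv with hv | hv <;> simp only [hv, nsmul_eq_mul] at hcompl ⊢ <;> lia

end Flow

/-- Every 7-regular graph admits a zero-sum 5-flow: an assignment of values from
`{±1, ±2, ±3, ±4}` to the edges such that at every vertex the incident values sum to zero. -/
theorem stmt_2 {V : Type*} [Fintype V] [DecidableEq V] (G : SimpleGraph V)
    [DecidableRel G.Adj] (hreg : G.IsRegularOfDegree 7) :
    ∃ f : Sym2 V → ℤ,
      (∀ e ∈ G.edgeFinset, f e ≠ 0 ∧ (f e).natAbs ≤ 4) ∧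
      (∀ v : V, ∑ e ∈ G.incidenceFinset v, f e = 0) := by
  obtain ⟨N, _, hN, hdeg, hdeg34⟩ :=
    exists_le_degree_eq_of_adj (k := 3) hreg (by lia) (by lia) (by lia) (by decide)
  obtain ⟨σ, hσ⟩ := exists_perm_adj N (fun v => by grind) hdeg
  refine ⟨Sym2.lift ⟨flowValue N σ, flowValue_comm hdeg⟩, fun e _ => ?_, fun v => ?_⟩
  · induction e with
    | h u v => exact flowValue_ne_zero_and_natAbs_le (hdeg34 u)
  · rw [sum_incidenceFinset]
    exact sum_flowValue hreg hN hσ (hdeg34 v)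
end

section
/- Let r ≥ 3 be an integer with r ≠ 5. Then every r-regular graph admits a zero-sum 5-flow. -/
open Finset SimpleGraph

/-!
Cut every bridge of an `(m + 2)`-regular graph, `m ≥ 1`, in the middle. Tutte's theorem, applied to
a gadget graph, selects two darts at every vertex so that off the bridges a dart is selected
together with its reverse: the gadget carries a fractional perfect matching, and since the halves
of the bridges form a clique, at most one odd component of a Tutte violator meets them; parity
excludes a surplus of one. By König's theorem the selected darts can be coloured with two colours
and the others with `m` further colours, so that every colour occurs exactly once among the darts
at each vertex and exactly once among their reverses. Give the colours weights `±1`, `±2` with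
total zero such that no cancellation occurs among the first two colours or among the last `m`.
Adding the weight of a dart to that of its reverse yields a zero-sum flow with nonzero values
bounded by `4`, and a half of a bridge, being its own reverse, receives `±2` or `±4`. Since the
absolute value on one half can be prescribed, flows on the two sides of a bridge can be glued after
a change of sign, and the bridges are restored one at a time.
-/

section Tutte

variable {W : Type*} {Γ : SimpleGraph W} {U : Set W}

lemma ncard_add_two_le_of_isTutteViolator [Finite W] (heven : Even (Nat.card W))
    (hU : Γ.IsTutteViolator U) :
    U.ncard + 2 ≤ ((⊤ : Γ.Subgraph).deleteVerts U).coe.oddComponents.ncard := by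
  have hcard : U.ncard + Nat.card ((⊤ : Γ.Subgraph).deleteVerts U).verts = Nat.card W := by
    rw [Nat.card_coe_set_eq, Subgraph.deleteVerts_verts, Subgraph.verts_top,
      ← Set.compl_eq_univ_sdiff, Set.ncard_add_ncard_compl]
  have hparity := odd_ncard_oddComponents ((⊤ : Γ.Subgraph).deleteVerts U).coe
  rw [IsTutteViolator] at hU
  grind

lemma mem_image_val_supp_of_adj
    (c : ((⊤ : Γ.Subgraph).deleteVerts U).coe.ConnectedComponent) {a b : W}
    (ha : a ∈ Subtype.val '' c.supp) (hb : b ∉ U) (hab : Γ.Adj a b) :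
    b ∈ Subtype.val '' c.supp := by
  obtain ⟨a, ha, rfl⟩ := ha
  refine ⟨⟨b, by simp [hb]⟩, c.mem_supp_of_adj_mem_supp ha ?_, rfl⟩
  simp only [Subgraph.coe_adj, Subgraph.deleteVerts_adj, Subgraph.verts_top, Set.mem_univ,
    true_and, Subgraph.top_adj]
  exact ⟨a.2.2, hb, hab⟩

lemma pairwise_disjoint_image_val_supp :
    Pairwise fun c c' : ((⊤ : Γ.Subgraph).deleteVerts U).coe.ConnectedComponent ↦
      Disjoint (Subtype.val '' c.supp) (Subtype.val '' c'.supp) := fun _ _ hne ↦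
  (Set.disjoint_image_iff Subtype.val_injective).2 (pairwise_disjoint_supp_connectedComponent _ hne)

lemma subsingleton_components_meeting_isClique {B : Set W} (hB : Γ.IsClique B) :
    {c : ((⊤ : Γ.Subgraph).deleteVerts U).coe.ConnectedComponent |
      ¬ Disjoint (Subtype.val '' c.supp) B}.Subsingleton := by
  intro c hc c' hc'
  obtain ⟨a, hac, haB⟩ := Set.not_disjoint_iff.1 hc
  obtain ⟨b, hbc, hbB⟩ := Set.not_disjoint_iff.1 hc'
  by_contra hne
  have hdisj := pairwise_disjoint_image_val_supp hne
  have hbU : b ∉ U := by obtain ⟨b, -, rfl⟩ := hbc; exact b.2.2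
  have hab : Γ.Adj a b := hB haB hbB (hdisj.ne_of_mem hac hbc)
  exact hdisj.notMem_of_mem_right hbc (mem_image_val_supp_of_adj c hac hbU hab)

variable [Fintype W] [DecidableEq W]

lemma card_le_card_of_le_sum_cut {ι : Type*} (C : Finset ι) (K : ι → Finset W) (U : Finset W)
    (y : W → W → ℕ) {r : ℕ} (hr : 0 < r) (hcol : ∀ b, ∑ a, y a b ≤ r)
    (hdisj : (C : Set ι).PairwiseDisjoint K)
    (hy : ∀ c ∈ C, ∀ a ∈ K c, ∀ b ∉ K c, y a b ≠ 0 → b ∈ U)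
    (hcut : ∀ c ∈ C, r ≤ ∑ a ∈ K c, ∑ b ∈ (K c)ᶜ, y a b) : #C ≤ #U := by
  refine Nat.le_of_mul_le_mul_right ?_ hr
  calc #C * r ≤ ∑ c ∈ C, ∑ a ∈ K c, ∑ b ∈ (K c)ᶜ, y a b := card_nsmul_le_sum C _ r hcut
    _ ≤ ∑ c ∈ C, ∑ a ∈ K c, ∑ b ∈ U, y a b := by
      refine sum_le_sum fun c hc ↦ sum_le_sum fun a ha ↦ sum_le_sum_of_ne_zero fun b hb ↦ ?_
      exact hy c hc a ha b (mem_compl.1 hb)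
    _ = ∑ a ∈ C.biUnion K, ∑ b ∈ U, y a b := (sum_biUnion hdisj).symm
    _ ≤ ∑ a, ∑ b ∈ U, y a b := sum_le_sum_of_subset (subset_univ _)
    _ = ∑ b ∈ U, ∑ a, y a b := sum_comm
    _ ≤ #U * r := sum_le_card_nsmul U _ r fun b _ ↦ hcol b

lemma exists_isPerfectMatching_of_le_sum_cut {B : Set W} (hB : Γ.IsClique B)
    (heven : Even (Nat.card W)) (y : W → W → ℕ) {r : ℕ} (hr : 0 < r)
    (hy : ∀ a b, y a b ≠ 0 → Γ.Adj a b) (hcol : ∀ b, ∑ a, y a b ≤ r)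
    (hcut : ∀ K : Finset W, Odd #K → Disjoint (K : Set W) B →
      r ≤ ∑ a ∈ K, ∑ b ∈ Kᶜ, y a b) :
    ∃ M : Γ.Subgraph, M.IsPerfectMatching := by
  classical
  refine tutte.2 fun U hU ↦ ?_
  let H := ((⊤ : Γ.Subgraph).deleteVerts U).coe
  let verts (c : H.ConnectedComponent) : Finset W := (Subtype.val '' c.supp).toFinset
  let odds := H.oddComponents.toFinset
  let avoids (c : H.ConnectedComponent) : Prop := Disjoint (Subtype.val '' c.supp) B
  have hodds : U.ncard + 2 ≤ #odds := by
    rw [← Set.ncard_eq_toFinset_card']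
    exact ncard_add_two_le_of_isTutteViolator heven hU
  have hmeet : #{c ∈ odds | ¬ avoids c} ≤ 1 := card_le_one.2 fun c hc c' hc' ↦
    subsingleton_components_meeting_isClique hB (mem_filter.1 hc).2 (mem_filter.1 hc').2
  have havoid : #{c ∈ odds | avoids c} ≤ #U.toFinset := by
    refine card_le_card_of_le_sum_cut _ verts _ y hr hcol ?_ ?_ ?_
    · exact fun c _ c' _ hne ↦ Set.disjoint_toFinset.2 (pairwise_disjoint_image_val_supp hne)
    · intro c _ a ha b hb hab
      by_contra hbU
      exact hb (Set.mem_toFinset.2 (mem_image_val_supp_of_adj c (Set.mem_toFinset.1 ha)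
        (by simpa using hbU) (hy a b hab)))
    · intro c hc
      obtain ⟨hodd, hcB⟩ := mem_filter.1 hc
      refine hcut _ ?_ (by rwa [Set.coe_toFinset])
      rw [← Set.ncard_eq_toFinset_card', Set.ncard_image_of_injective _ Subtype.val_injective]
      exact (Set.mem_toFinset.1 hodd : c ∈ H.oddComponents)
  have hsplit : #{c ∈ odds | avoids c} + #{c ∈ odds | ¬ avoids c} = #odds :=
    card_filter_add_card_filter_not _
  rw [← Set.ncard_eq_toFinset_card'] at havoid
  omega

end Tutte

section RegularColoring

variable {V D : Type*}

lemma exists_subset_fiberwise_card_eq_one [Finite V] [DecidableEq V] (t h : D → V)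
    {s : Finset D} {n : ℕ} (hn : 0 < n) (ht : ∀ v, #{d ∈ s | t d = v} = n)
    (hh : ∀ v, #{d ∈ s | h d = v} = n) :
    ∃ P ⊆ s, (∀ v, #{d ∈ P | t d = v} = 1) ∧ ∀ v, #{d ∈ P | h d = v} = 1 := by
  classical
  cases nonempty_fintype V
  have hhall (A : Finset V) : #A ≤ #(A.biUnion fun v ↦ {d ∈ s | t d = v}.image h) := by
    refine Nat.le_of_mul_le_mul_right ?_ hn
    calc #A * n = #{d ∈ s | t d ∈ A} := by
          rw [← sum_card_fiberwise_eq_card_filter, sum_const_nat fun v _ ↦ ht v]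
      _ ≤ #{d ∈ s | h d ∈ A.biUnion fun v ↦ {d ∈ s | t d = v}.image h} := by
          refine card_le_card fun d hd ↦ ?_
          simp only [mem_filter, mem_biUnion, mem_image] at hd ⊢
          exact ⟨hd.1, t d, hd.2, d, ⟨hd.1, rfl⟩, rfl⟩
      _ = #(A.biUnion fun v ↦ {d ∈ s | t d = v}.image h) * n := by
          rw [← sum_card_fiberwise_eq_card_filter, sum_const_nat fun v _ ↦ hh v]
  obtain ⟨σ, hσ, hσs⟩ := (all_card_le_biUnion_card_iff_exists_injective _).1 hhall
  have hp (v : V) : ∃ d ∈ s, t d = v ∧ h d = σ v := by simpa [and_assoc] using hσs v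
  choose p hps hpt hph using hp
  refine ⟨univ.image p, image_subset_iff.2 fun v _ ↦ hps v, fun v ↦ card_eq_one.2 ⟨p v, ?_⟩,
    fun w ↦ ?_⟩
  · grind
  · obtain ⟨v, rfl⟩ := Finite.surjective_of_injective hσ w
    refine card_eq_one.2 ⟨p v, ?_⟩
    grind [Function.Injective]

lemma bijOn_ite_of_bijOn_sdiff [DecidableEq V] [DecidableEq D] {t : D → V} {s P : Finset D}
    {v : V} {n : ℕ} {c : D → ℕ} (hP : P ⊆ s) (hPv : #{d ∈ P | t d = v} = 1)
    (hc : Set.BijOn c {d ∈ s \ P | t d = v} (range n)) :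
    Set.BijOn (fun d ↦ if d ∈ P then n else c d) {d ∈ s | t d = v} (range (n + 1)) := by
  obtain ⟨p, hp⟩ := card_eq_one.1 hPv
  have hpv : ∀ d, d ∈ P ∧ t d = v ↔ d = p := by simpa [Finset.ext_iff] using hp
  have hpP : p ∈ P := ((hpv p).2 rfl).1
  have hfiber : {d | d ∈ s ∧ t d = v} = insert p {d | d ∈ s \ P ∧ t d = v} := by
    ext d
    simp only [Set.mem_ofPred_eq, Set.mem_insert_iff, mem_sdiff]
    grind
  have hc' : Set.BijOn (fun d ↦ if d ∈ P then n else c d) {d ∈ s \ P | t d = v} (range n) :=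
    hc.congr fun d hd ↦ (if_neg (mem_sdiff.1 hd.1).2).symm
  rw [hfiber, range_add_one, coe_insert]
  simpa [hpP] using hc'.insert (a := p) (by simp [hpP])

/-- König's edge colouring theorem for a regular bipartite multigraph with edge set `s`. -/
lemma exists_coloring_bijOn_fibers [Finite V] [DecidableEq V] (t h : D → V) {n : ℕ}
    {s : Finset D} (ht : ∀ v, #{d ∈ s | t d = v} = n) (hh : ∀ v, #{d ∈ s | h d = v} = n) :
    ∃ c : D → ℕ, ∀ v, Set.BijOn c {d ∈ s | t d = v} (range n) ∧
      Set.BijOn c {d ∈ s | h d = v} (range n) := by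
  classical
  induction n generalizing s with
  | zero =>
    simp only [card_eq_zero, filter_eq_empty_iff] at ht hh
    exact ⟨0, fun v ↦ by
      simpa [Set.eq_empty_iff_forall_notMem] using ⟨fun x ↦ @ht v x, fun x ↦ @hh v x⟩⟩
  | succ n ih =>
    obtain ⟨P, hP, hPt, hPh⟩ := exists_subset_fiberwise_card_eq_one t h n.succ_pos ht hh
    have hrest (q : D → Prop) [DecidablePred q] (hq : #(s.filter q) = n + 1)
        (hPq : #(P.filter q) = 1) : #((s \ P).filter q) = n := by
      have hsdiff : (s \ P).filter q = s.filter q \ P.filter q := by grind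
      rw [hsdiff, card_sdiff_of_subset (filter_subset_filter q hP), hq, hPq, Nat.add_sub_cancel]
    obtain ⟨c, hc⟩ := ih (fun v ↦ hrest _ (ht v) (hPt v)) (fun v ↦ hrest _ (hh v) (hPh v))
    exact ⟨_, fun v ↦ ⟨bijOn_ite_of_bijOn_sdiff hP (hPt v) (hc v).1,
      bijOn_ite_of_bijOn_sdiff hP (hPh v) (hc v).2⟩⟩

lemma bijOn_ite_of_bijOn_compl [Fintype D] [DecidableEq D] {s : Finset D} {q : D → Prop}
    {m n : ℕ} {c₁ c₂ : D → ℕ} (hc₁ : Set.BijOn c₁ {d ∈ s | q d} (range m))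
    (hc₂ : Set.BijOn c₂ {d ∈ sᶜ | q d} (range n)) :
    Set.BijOn (fun d ↦ if d ∈ s then c₁ d else m + c₂ d) {d | q d} (range (m + n)) := by
  obtain ⟨hmap₁, hinj₁, hsurj₁⟩ := hc₁
  obtain ⟨hmap₂, hinj₂, hsurj₂⟩ := hc₂
  simp only [Set.MapsTo, Set.InjOn, Set.SurjOn, Set.subset_def, Set.mem_image, Set.mem_ofPred_eq,
    mem_coe, mem_compl, mem_range] at hmap₁ hinj₁ hsurj₁ hmap₂ hinj₂ hsurj₂
  refine ⟨fun d hd ↦ ?_, fun d hd d' hd' ↦ ?_, fun i hi ↦ ?_⟩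
  · grind
  · grind
  · obtain hlt | ⟨j, rfl⟩ := (lt_or_ge i m).imp_right Nat.exists_eq_add_of_le
    · grind
    · grind

lemma exists_coloring_bijOn_fibers_of_mem_iff_lt [Fintype D] [Finite V] [DecidableEq V]
    [DecidableEq D] (t h : D → V) {p q : ℕ} {s : Finset D}
    (ht : ∀ v, #{d ∈ s | t d = v} = p) (hh : ∀ v, #{d ∈ s | h d = v} = p)
    (ht' : ∀ v, #{d ∈ sᶜ | t d = v} = q) (hh' : ∀ v, #{d ∈ sᶜ | h d = v} = q) :
    ∃ c : D → ℕ, (∀ d, d ∈ s ↔ c d < p) ∧ ∀ v,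
      Set.BijOn c {d | t d = v} (range (p + q)) ∧ Set.BijOn c {d | h d = v} (range (p + q)) := by
  obtain ⟨c₁, hc₁⟩ := exists_coloring_bijOn_fibers t h ht hh
  obtain ⟨c₂, hc₂⟩ := exists_coloring_bijOn_fibers t h ht' hh'
  have hlt (d : D) (hd : d ∈ s) : c₁ d < p := by simpa using (hc₁ (t d)).1.mapsTo ⟨hd, rfl⟩
  refine ⟨fun d ↦ if d ∈ s then c₁ d else p + c₂ d, fun d ↦ by grind, fun v ↦ ⟨?_, ?_⟩⟩
  · exact bijOn_ite_of_bijOn_compl (hc₁ v).1 (hc₂ v).1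
  · exact bijOn_ite_of_bijOn_compl (hc₁ v).2 (hc₂ v).2

end RegularColoring

section Weights

variable {ι : Type*}

/-- A choice of weights `±1`, `±2` no two of which cancel, so that an edge whose two darts have
colours with such weights can carry their sum as a nonzero flow value. -/
structure IsCancelFree (w : ι → ℤ) : Prop where
  natAbs_eq (i : ι) : (w i).natAbs = 1 ∨ (w i).natAbs = 2
  add_ne_zero (i j : ι) : w i + w j ≠ 0

lemma IsCancelFree.neg {w : ι → ℤ} (hw : IsCancelFree w) : IsCancelFree (-w) where
  natAbs_eq i := by simpa using hw.natAbs_eq i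
  add_ne_zero i j := by simpa [← neg_add, -neg_add_rev] using hw.add_ne_zero i j

lemma isCancelFree_ite (p : ι → Prop) [DecidablePred p] {x y : ℤ}
    (hx : x.natAbs = 1 ∨ x.natAbs = 2) (hy : y.natAbs = 1 ∨ y.natAbs = 2) (hxy : x + y ≠ 0) :
    IsCancelFree fun i ↦ if p i then x else y where
  natAbs_eq i := by grind
  add_ne_zero i j := by grind

lemma sum_ite_two_neg_one [DecidableEq ι] {s T : Finset ι} (hT : T ⊆ s) :
    ∑ i ∈ s, (if i ∈ T then 2 else -1 : ℤ) = 3 * #T - #s := by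
  have hfilter : s.filter (· ∈ T) = T := by grind
  have hcard : (#T : ℤ) + #(s.filter (· ∉ T)) = #s := by
    exact_mod_cast hfilter ▸ card_filter_add_card_filter_not (s := s) (· ∈ T)
  rw [sum_ite, sum_const, sum_const, hfilter, nsmul_eq_mul, nsmul_eq_mul]
  linarith

lemma exists_isCancelFree_sum_eq {s : Finset ι} {i₀ : ι} (hi₀ : i₀ ∈ s) {a k : ℕ}
    (ha : a ≤ #s) (hk : k = 1 ∧ a < #s ∨ k = 2 ∧ 0 < a) :
    ∃ w : ι → ℤ, IsCancelFree w ∧ (w i₀).natAbs = k ∧ ∑ i ∈ s, w i = 3 * a - #s := by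
  classical
  have hw (T : Finset ι) : IsCancelFree fun i ↦ if i ∈ T then (2 : ℤ) else -1 :=
    isCancelFree_ite _ (by simp) (by simp) (by simp)
  obtain ⟨rfl, hlt⟩ | ⟨rfl, hpos⟩ := hk
  · obtain ⟨T, hT, rfl⟩ := exists_subset_card_eq (s := s.erase i₀) (n := a)
      (by rw [card_erase_of_mem hi₀]; omega)
    refine ⟨_, hw T, ?_, sum_ite_two_neg_one (hT.trans (erase_subset _ _))⟩
    simp [show i₀ ∉ T from fun h ↦ notMem_erase i₀ s (hT h)]
  · obtain ⟨T, hiT, hT, rfl⟩ := exists_subsuperset_card_eq (singleton_subset_iff.2 hi₀)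
      (by rwa [card_singleton]) ha
    exact ⟨_, hw T, by simp [singleton_subset_iff.1 hiT], sum_ite_two_neg_one hT⟩

lemma exists_isCancelFree_sum_mem {s : Finset ι} {i₀ : ι} (hi₀ : i₀ ∈ s) {k : ℕ}
    (hk : k = 1 ∨ k = 2) :
    ∃ w : ι → ℤ, IsCancelFree w ∧ (w i₀).natAbs = k ∧
      (∑ i ∈ s, w i = 1 ∨ ∑ i ∈ s, w i = 3 ∨ ∑ i ∈ s, w i = 2 ∧ k = 2) := by
  have hpos : 0 < #s := card_pos.2 ⟨i₀, hi₀⟩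
  obtain ⟨hk1, hmod⟩ | hnot := em (k = 1 ∧ #s % 3 = 1)
  · obtain ⟨w, hw, hwi, hsum⟩ :=
      exists_isCancelFree_sum_eq hi₀ (a := #s / 3) (k := k) (by omega) (by omega)
    exact ⟨-w, hw.neg, by simpa using hwi, .inl (by simp [hsum]; omega)⟩
  · obtain ⟨w, hw, hwi, hsum⟩ :=
      exists_isCancelFree_sum_eq hi₀ (a := #s / 3 + 1) (k := k) (by omega) (by omega)
    exact ⟨w, hw, hwi, by omega⟩

lemma exists_isCancelFree_range_two_sum_eq {j : ℕ} (hj : j < 2) {k : ℕ} (hk : k = 1 ∨ k = 2)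
    {t : ℤ} (ht : t = 1 ∨ t = 3 ∨ t = 2 ∧ k = 1) :
    ∃ w : ℕ → ℤ, IsCancelFree w ∧ (w j).natAbs = k ∧ ∑ i ∈ range 2, w i = t := by
  obtain ⟨x, y, hx, hy, hxy⟩ : ∃ x y : ℤ, x.natAbs = k ∧ (y.natAbs = 1 ∨ y.natAbs = 2) ∧
      x + y = t := by
    obtain rfl | rfl := hk <;> obtain rfl | rfl | ⟨rfl, h⟩ := ht
    exacts [⟨-1, 2, by simp⟩, ⟨1, 2, by simp⟩, ⟨1, 1, by simp⟩, ⟨2, -1, by simp⟩, ⟨2, 1, by simp⟩,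
      by omega]
  refine ⟨fun i ↦ if i = j then x else y, isCancelFree_ite _ (by omega) hy (by omega), ?_, ?_⟩
  · simpa using hx
  · interval_cases j <;> simp [sum_range_succ] <;> omega

lemma exists_weights_sum_range_eq_zero {m i₀ k : ℕ} (hm : 0 < m) (hi₀ : i₀ < 2 + m)
    (hk : k = 1 ∨ k = 2) :
    ∃ w : ℕ → ℤ, (∀ i, (w i).natAbs = 1 ∨ (w i).natAbs = 2) ∧
      (∀ i j, (i < 2 ↔ j < 2) → w i + w j ≠ 0) ∧ (w i₀).natAbs = k ∧
      ∑ i ∈ range (2 + m), w i = 0 := by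
  obtain ⟨α, β, hα, hβ, hsum, hαk, hβk⟩ : ∃ α β : ℕ → ℤ, IsCancelFree α ∧ IsCancelFree β ∧
      ∑ i ∈ range 2, α i = ∑ i ∈ range m, β i ∧ (i₀ < 2 → (α i₀).natAbs = k) ∧
      (2 ≤ i₀ → (β (i₀ - 2)).natAbs = k) := by
    obtain hlt | hge := lt_or_ge i₀ 2
    · obtain ⟨β, hβ, -, hsum⟩ :=
        exists_isCancelFree_sum_mem (mem_range.2 hm) (k := 1) (.inl rfl)
      obtain ⟨α, hα, hαk, hsum'⟩ := exists_isCancelFree_range_two_sum_eq hlt hk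
        (t := ∑ i ∈ range m, β i) (by omega)
      exact ⟨α, β, hα, hβ, hsum', fun _ ↦ hαk, by omega⟩
    · obtain ⟨β, hβ, hβk, hsum⟩ :=
        exists_isCancelFree_sum_mem (mem_range.2 (show i₀ - 2 < m by omega)) hk
      obtain ⟨α, hα, -, hsum'⟩ := exists_isCancelFree_range_two_sum_eq two_pos (k := 1) (.inl rfl)
        (t := ∑ i ∈ range m, β i) (by omega)
      exact ⟨α, β, hα, hβ, hsum', by omega, fun _ ↦ hβk⟩
  refine ⟨fun i ↦ if i < 2 then α i else -β (i - 2), fun i ↦ ?_, fun i j hij ↦ ?_, ?_, ?_⟩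
  · grind [hα.natAbs_eq i, hβ.natAbs_eq (i - 2)]
  · grind [hα.add_ne_zero i j, hβ.add_ne_zero (i - 2) (j - 2)]
  · grind
  · have hα' : ∑ i ∈ range 2, (if i < 2 then α i else -β (i - 2)) = ∑ i ∈ range 2, α i :=
      sum_congr rfl fun i hi ↦ if_pos (mem_range.1 hi)
    have hβ' : ∑ i ∈ range m, (if 2 + i < 2 then α (2 + i) else -β (2 + i - 2)) =
        -∑ i ∈ range m, β i := by
      rw [← sum_neg_distrib]
      exact sum_congr rfl fun i _ ↦ by grind
    rw [sum_range_add, hα', hβ', hsum, add_neg_cancel]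

end Weights

lemma isBridge_edge_iff_exists_set {V : Type*} {G : SimpleGraph V} {b : G.Dart} :
    G.IsBridge b.edge ↔ ∃ X : Set V, b.fst ∈ X ∧ b.snd ∉ X ∧
      ∀ d : G.Dart, d.edge ≠ b.edge → (d.fst ∈ X ↔ d.snd ∈ X) := by
  constructor
  · intro hb
    refine ⟨{x | (G.deleteEdges {b.edge}).Reachable b.fst x}, .rfl, hb, fun d hd ↦ ?_⟩
    have hadj : (G.deleteEdges {b.edge}).Adj d.fst d.snd := deleteEdges_adj.2 ⟨d.adj, hd⟩
    exact ⟨fun h ↦ h.trans hadj.reachable, fun h ↦ h.trans hadj.symm.reachable⟩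
  · rintro ⟨X, hfst, hsnd, hX⟩ ⟨p⟩
    obtain ⟨d, -, hd, hd'⟩ := p.exists_boundary_dart X hfst hsnd
    obtain ⟨hadj, hne⟩ := deleteEdges_adj.1 d.adj
    exact hd' ((hX ⟨d.toProd, hadj⟩ hne).1 hd)

lemma exists_mem_symm_notMem_of_not_isBridge {V : Type*} {G : SimpleGraph V} {D : Set G.Dart}
    {A : Set V} {d₀ : G.Dart} (hd₀ : ¬ G.IsBridge d₀.edge)
    (hdev : ∀ d, ¬ (d ∈ D ↔ d.fst ∈ A) ↔ d = d₀) : ∃ d ∈ D, d.symm ∉ D := by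
  by_contra! hclosed
  have hsymm (d : G.Dart) : d ∈ D ↔ d.symm ∈ D := ⟨hclosed d, hclosed d.symm⟩
  have hfst (d : G.Dart) (hd : d ≠ d₀) : d.fst ∈ A ↔ d ∈ D := by grind
  have hoff (d : G.Dart) (hd : d.edge ≠ d₀.edge) : d.fst ∈ A ↔ d.snd ∈ A := by
    have hd' : d.symm.edge ≠ d₀.edge := by rwa [d.edge_symm]
    rw [hfst d (ne_of_apply_ne _ hd), hsymm, ← hfst d.symm (ne_of_apply_ne _ hd')]
    rfl
  have hon : d₀.fst ∈ A ↔ d₀.snd ∉ A := by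
    have hsnd : d₀.snd ∈ A ↔ d₀.symm ∈ D := hfst d₀.symm d₀.symm_ne
    rw [hsnd, ← hsymm]
    exact (not_iff.1 ((hdev d₀).2 rfl)).symm
  refine hd₀ (isBridge_edge_iff_exists_set.2 ?_)
  by_cases hA : d₀.fst ∈ A
  · exact ⟨A, hA, hon.1 hA, hoff⟩
  · exact ⟨Aᶜ, hA, by simpa [hon] using hA, fun d hd ↦ not_congr (hoff d hd)⟩

section Gadget

lemma even_card_dart_sum_prod_fin {V : Type*} [Fintype V] {G : SimpleGraph V}
    [DecidableRel G.Adj] {m : ℕ} (hreg : G.IsRegularOfDegree (m + 2)) :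
    Even (Nat.card (G.Dart ⊕ V × Fin m)) := by
  rw [Nat.card_eq_fintype_card, Fintype.card_sum, G.dart_card_eq_sum_degrees,
    sum_congr rfl fun v _ ↦ hreg v, Fintype.card_prod, sum_const, Fintype.card_fin]
  exact ⟨Fintype.card V * (m + 1), by simp only [card_univ, smul_eq_mul]; ring⟩

variable {V : Type*} [DecidableEq V] {G : SimpleGraph V} (S : Finset (Sym2 V)) (m : ℕ)

/-- Reversal of darts after the edges in `S` have been cut in the middle: the two halves of such
an edge become independent, so each of them is its own reverse. -/
def splitSymm (d : G.Dart) : G.Dart :=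
  if d.edge ∈ S then d else d.symm

lemma splitSymm_of_mem {d : G.Dart} (hd : d.edge ∈ S) : splitSymm S d = d := if_pos hd

lemma splitSymm_of_notMem {d : G.Dart} (hd : d.edge ∉ S) : splitSymm S d = d.symm := if_neg hd

lemma splitSymm_involutive : Function.Involutive (splitSymm S : G.Dart → G.Dart) := fun d ↦ by
  by_cases hd : d.edge ∈ S
  · rw [splitSymm_of_mem S hd, splitSymm_of_mem S hd]
  · rw [splitSymm_of_notMem S hd, splitSymm_of_notMem S (by simpa using hd), Dart.symm_symm]

/-- Tutte's gadget for choosing all but `m` of the darts at every vertex, in a way invariant under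
`splitSymm S`. The chosen darts are those not matched to one of the `m` cores `(v, i)` at their
tail. The halves of the edges in `S` form a clique, so they can be matched freely among
themselves. -/
def gadgetGraph : SimpleGraph (G.Dart ⊕ V × Fin m) where
  Adj
    | .inl d, .inl d' => d ≠ d' ∧ (splitSymm S d = d' ∨ d.edge ∈ S ∧ d'.edge ∈ S)
    | .inl d, .inr p => d.fst = p.1
    | .inr p, .inl d => d.fst = p.1
    | .inr _, .inr _ => False
  symm := ⟨by
    rintro (d | p) (d' | p') h
    · exact ⟨h.1.symm, h.2.imp ((splitSymm_involutive S).eq_iff.1 · |>.symm) And.symm⟩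
    all_goals exact h⟩
  loopless := ⟨by
    rintro (d | p) h
    · exact h.1 rfl
    · exact h⟩

/-- `m * (m + 2)` times a fractional perfect matching of the gadget graph, with the halves of the
edges in `S` used asymmetrically: they receive more than they send. -/
def gadgetWeight : G.Dart ⊕ V × Fin m → G.Dart ⊕ V × Fin m → ℕ
  | .inl d, .inl d' => if d.edge ∉ S ∧ d.symm = d' then 2 * m else 0
  | .inl d, .inr p => if d.fst = p.1 then m else 0
  | .inr p, .inl d => if d.fst = p.1 then (if d.edge ∈ S then m + 2 else m) else 0
  | .inr _, .inr _ => 0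

variable {S m}

lemma gadgetGraph_adj_of_gadgetWeight_ne_zero {a b : G.Dart ⊕ V × Fin m}
    (h : gadgetWeight S m a b ≠ 0) : (gadgetGraph S m).Adj a b := by
  rcases a with d | p <;> rcases b with d' | p' <;>
    simp only [gadgetWeight, ne_eq, ite_eq_right_iff, Classical.not_imp, not_true_eq_false] at h
  · exact ⟨fun hdd ↦ d.symm_ne (h.1.2.trans hdd.symm), .inl (h.1.2 ▸ splitSymm_of_notMem S h.1.1)⟩
  · exact h.1
  · exact h.1

lemma isClique_gadgetGraph :
    (gadgetGraph S m).IsClique (Sum.inl '' {d : G.Dart | d.edge ∈ S}) := by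
  rintro _ ⟨d, hd, rfl⟩ _ ⟨d', hd', rfl⟩ hne
  exact ⟨fun h ↦ hne (congrArg _ h), .inr ⟨hd, hd'⟩⟩

variable [Fintype V]

lemma sum_ite_eq_fst {ι M : Type*} [Fintype ι] [AddCommMonoid M] (v : V) (f : V × ι → M) :
    ∑ p, (if v = p.1 then f p else 0) = ∑ i, f (v, i) := by
  rw [Fintype.sum_prod_type, sum_comm]
  simp

lemma sum_cut_gadgetWeight_inl_inr {K : Finset (G.Dart ⊕ V × Fin m)} {d : G.Dart}
    (hd : d.edge ∈ S → .inl d ∉ K) :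
    ∑ p, (if .inl d ∈ K ∧ .inr p ∉ K then gadgetWeight S m (.inl d) (.inr p) else 0) +
      ∑ p, (if .inr p ∈ K ∧ .inl d ∉ K then gadgetWeight S m (.inr p) (.inl d) else 0) =
      #{i | ¬ (.inl d ∈ K ↔ .inr (d.fst, i) ∈ K)} * if d.edge ∈ S then m + 2 else m := by
  simp only [gadgetWeight, ← ite_and, and_comm (b := d.fst = _)]
  simp only [ite_and (d.fst = _), sum_ite_eq_fst, ← sum_add_distrib]
  rw [← smul_eq_mul, ← sum_const, sum_filter]
  refine sum_congr rfl fun i _ ↦ ?_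
  grind

variable [DecidableRel G.Adj]

lemma card_darts_fst_eq {r : ℕ} (hreg : G.IsRegularOfDegree r) (v : V) :
    #{d : G.Dart | d.fst = v} = r :=
  (G.dart_fst_fiber_card_eq_degree v).trans (hreg v)

lemma sum_gadgetWeight_eq (hreg : G.IsRegularOfDegree (m + 2)) (b : G.Dart ⊕ V × Fin m) :
    ∑ a, gadgetWeight S m a b = m * (m + 2) := by
  rcases b with d | p
  · have hsymm : (∑ d' : G.Dart, if d'.edge ∉ S ∧ d'.symm = d then 2 * m else 0) =
        if d.edge ∈ S then 0 else 2 * m := by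
      rw [Fintype.sum_eq_single d.symm fun d' hd' ↦ by
        simp [Dart.symm_involutive.eq_iff, hd']]
      simp
    simp only [Fintype.sum_sum_type, gadgetWeight, hsymm, sum_ite_eq_fst, sum_const, card_univ,
      Fintype.card_fin, smul_eq_mul]
    split_ifs <;> ring
  · simp only [Fintype.sum_sum_type, gadgetWeight, sum_const_zero, add_zero, ← sum_filter,
      sum_const, card_darts_fst_eq hreg, smul_eq_mul, mul_comm]

lemma sum_cut_gadgetWeight_inl_inl (K : Finset (G.Dart ⊕ V × Fin m)) (d : G.Dart) :
    ∑ d', (if .inl d ∈ K ∧ .inl d' ∉ K then gadgetWeight S m (.inl d) (.inl d') else 0) =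
      if d.edge ∉ S ∧ .inl d ∈ K ∧ .inl d.symm ∉ K then 2 * m else 0 := by
  rw [Fintype.sum_eq_single d.symm fun d' hd' ↦ by simp [gadgetWeight, hd'.symm]]
  simp only [gadgetWeight, and_true]
  grind

lemma sum_cut_gadgetWeight {K : Finset (G.Dart ⊕ V × Fin m)}
    (hK : ∀ d : G.Dart, d.edge ∈ S → .inl d ∉ K) :
    ∑ a ∈ K, ∑ b ∈ Kᶜ, gadgetWeight S m a b =
      (∑ d : G.Dart, if d.edge ∉ S ∧ .inl d ∈ K ∧ .inl d.symm ∉ K then 2 * m else 0) +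
      ∑ d : G.Dart, #{i | ¬ (.inl d ∈ K ↔ .inr (d.fst, i) ∈ K)} *
        if d.edge ∈ S then m + 2 else m := by
  have hcut : ∑ a ∈ K, ∑ b ∈ Kᶜ, gadgetWeight S m a b =
      ∑ a, ∑ b, if a ∈ K ∧ b ∉ K then gadgetWeight S m a b else 0 := by
    simp only [ite_and, ← mem_compl, sum_ite_irrel, sum_const_zero, sum_ite_mem, univ_inter]
  have hcores (p p' : V × Fin m) : gadgetWeight (G := G) S m (.inr p) (.inr p') = 0 := rfl
  simp only [hcut, Fintype.sum_sum_type, sum_add_distrib, sum_cut_gadgetWeight_inl_inl, hcores,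
    ite_self, sum_const_zero, add_zero, ← sum_cut_gadgetWeight_inl_inr (hK _)]
  rw [sum_comm (s := univ (α := V × Fin m))]
  ring

lemma le_sum_cut_of_cores_separated (hreg : G.IsRegularOfDegree (m + 2))
    {K : Finset (G.Dart ⊕ V × Fin m)} (hK : ∀ d : G.Dart, d.edge ∈ S → .inl d ∉ K) {v : V}
    {i j : Fin m} (hi : .inr (v, i) ∈ K) (hj : .inr (v, j) ∉ K) :
    m * (m + 2) ≤ ∑ a ∈ K, ∑ b ∈ Kᶜ, gadgetWeight S m a b := by
  have hd (d : G.Dart) (hd : d ∈ ({d | d.fst = v} : Finset G.Dart)) :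
      m ≤ #{i | ¬ (.inl d ∈ K ↔ .inr (d.fst, i) ∈ K)} * if d.edge ∈ S then m + 2 else m := by
    obtain rfl := (mem_filter.1 hd).2
    have hpos : 0 < #{i | ¬ (.inl d ∈ K ↔ .inr (d.fst, i) ∈ K)} := by
      by_cases hdK : .inl d ∈ K
      · exact card_pos.2 ⟨j, by simp [hdK, hj]⟩
      · exact card_pos.2 ⟨i, by simp [hdK, hi]⟩
    exact le_mul_of_one_le_of_le hpos (by split_ifs <;> omega)
  calc m * (m + 2) = #{d : G.Dart | d.fst = v} • m := by
        rw [card_darts_fst_eq hreg, smul_eq_mul, mul_comm]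
    _ ≤ _ := card_nsmul_le_sum _ _ _ hd
    _ ≤ _ := sum_le_sum_of_subset (subset_univ _)
    _ ≤ _ := Nat.le_add_left _ _
    _ = _ := (sum_cut_gadgetWeight hK).symm

lemma odd_card_deviating_of_cores_uniform (hreg : G.IsRegularOfDegree (m + 2))
    {K : Finset (G.Dart ⊕ V × Fin m)} (hodd : Odd #K) {A : Finset V}
    (hA : ∀ v i, .inr (v, i) ∈ K ↔ v ∈ A) :
    Odd #{d : G.Dart | ¬ (.inl d ∈ K ↔ d.fst ∈ A)} := by
  have hcores : #K.toRight = #A * m := by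
    have hprod : K.toRight = A ×ˢ univ := by ext ⟨v, i⟩; simp [hA]
    rw [hprod, card_product, card_univ, Fintype.card_fin]
  let tails : Finset G.Dart := {d | d.fst ∈ A}
  have hdarts : #tails = #A * (m + 2) := by
    rw [← sum_card_fiberwise_eq_card_filter, sum_const_nat fun v _ ↦ card_darts_fst_eq hreg v]
  have hdev : #{d : G.Dart | ¬ (.inl d ∈ K ↔ d.fst ∈ A)} + 2 * #(K.toLeft ∩ tails) =
      #K.toLeft + #tails := by
    have hsdiff : ({d | ¬ (.inl d ∈ K ↔ d.fst ∈ A)} : Finset G.Dart) =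
        K.toLeft \ tails ∪ tails \ K.toLeft := by ext d; simp [tails]; tauto
    rw [hsdiff, card_union_of_disjoint disjoint_sdiff_sdiff,
      ← card_sdiff_add_card_inter K.toLeft tails, ← card_sdiff_add_card_inter tails K.toLeft,
      inter_comm tails]
    ring
  have hK : #K.toLeft + #K.toRight = #K := card_toLeft_add_card_toRight
  rw [Nat.odd_iff] at hodd ⊢
  grind

lemma le_sum_cut_of_cores_uniform (hm : 0 < m) (hreg : G.IsRegularOfDegree (m + 2))
    (hS : ∀ d : G.Dart, G.IsBridge d.edge → d.edge ∈ S) {K : Finset (G.Dart ⊕ V × Fin m)}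
    (hodd : Odd #K) (hK : ∀ d : G.Dart, d.edge ∈ S → .inl d ∉ K) {A : Finset V}
    (hA : ∀ v i, .inr (v, i) ∈ K ↔ v ∈ A) :
    m * (m + 2) ≤ ∑ a ∈ K, ∑ b ∈ Kᶜ, gadgetWeight S m a b := by
  let dev : Finset G.Dart := {d | ¬ (.inl d ∈ K ↔ d.fst ∈ A)}
  have hmem (d : G.Dart) : d ∈ dev ↔ ¬ (.inl d ∈ K ↔ d.fst ∈ A) := mem_filter_univ d
  have hcores : ∑ d ∈ dev, m * (if d.edge ∈ S then m + 2 else m) ≤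
      ∑ d : G.Dart, #{i | ¬ (.inl d ∈ K ↔ .inr (d.fst, i) ∈ K)} *
        if d.edge ∈ S then m + 2 else m := by
    refine le_of_eq_of_le (sum_congr rfl fun d hd ↦ ?_) (sum_le_sum_of_subset (subset_univ dev))
    simp [hA, (hmem d).1 hd]
  rw [sum_cut_gadgetWeight hK]
  obtain hone | hthree : #dev = 1 ∨ 3 ≤ #dev := by
    obtain ⟨k, hk⟩ : Odd #dev := odd_card_deviating_of_cores_uniform hreg hodd hA
    omega
  · obtain ⟨d₀, hd₀⟩ := card_eq_one.1 hone
    rw [hd₀, sum_singleton] at hcores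
    split_ifs at hcores with hd₀S
    · exact hcores.trans (Nat.le_add_left _ _)
    obtain ⟨d, hdK, hdK'⟩ := exists_mem_symm_notMem_of_not_isBridge (D := {d | .inl d ∈ K})
      (A := A) (mt (hS d₀) hd₀S) fun d ↦ by simpa [hd₀] using (hmem d).symm
    have hpair : 2 * m ≤
        ∑ d : G.Dart, if d.edge ∉ S ∧ .inl d ∈ K ∧ .inl d.symm ∉ K then 2 * m else 0 := by
      refine le_of_eq_of_le ?_ (single_le_sum (fun _ _ ↦ Nat.zero_le _) (mem_univ d))
      exact (if_pos ⟨fun h ↦ hK d h hdK, hdK, hdK'⟩).symm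
    linarith
  · have hcores' : #dev • (m * m) ≤ ∑ d ∈ dev, m * (if d.edge ∈ S then m + 2 else m) :=
      card_nsmul_le_sum _ _ _ fun d _ ↦ by gcongr; split_ifs <;> omega
    have hm3 : m * (m + 2) ≤ 3 * (m * m) := by nlinarith
    calc m * (m + 2) ≤ #dev • (m * m) := hm3.trans (Nat.mul_le_mul_right _ hthree)
      _ ≤ _ := (hcores'.trans hcores).trans (Nat.le_add_left _ _)

lemma exists_isPerfectMatching_gadgetGraph (hm : 0 < m) (hreg : G.IsRegularOfDegree (m + 2))
    (hS : ∀ d : G.Dart, G.IsBridge d.edge → d.edge ∈ S) :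
    ∃ M : (gadgetGraph (G := G) S m).Subgraph, M.IsPerfectMatching := by
  refine exists_isPerfectMatching_of_le_sum_cut isClique_gadgetGraph
    (even_card_dart_sum_prod_fin hreg) (gadgetWeight S m) (r := m * (m + 2)) (by positivity)
    (fun _ _ ↦ gadgetGraph_adj_of_gadgetWeight_ne_zero) (fun b ↦ (sum_gadgetWeight_eq hreg b).le)
    fun K hodd hKS ↦ ?_
  have hK (d : G.Dart) (hd : d.edge ∈ S) : .inl d ∉ K := fun h ↦
    Set.disjoint_left.1 hKS h ⟨d, hd, rfl⟩
  by_cases! hsep : ∃ v i j, .inr (v, i) ∈ K ∧ .inr (v, j) ∉ K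
  · obtain ⟨v, i, j, hi, hj⟩ := hsep
    exact le_sum_cut_of_cores_separated hreg hK hi hj
  · refine le_sum_cut_of_cores_uniform hm hreg hS hodd hK (A := {v | .inr (v, ⟨0, hm⟩) ∈ K}) ?_
    exact fun v i ↦ by simpa using ⟨hsep v i _, hsep v _ i⟩

lemma card_matched_to_core {M : (gadgetGraph (G := G) S m).Subgraph} (hM : M.IsPerfectMatching)
    (v : V) [DecidablePred fun d ↦ ∃ p, M.Adj (.inl d) (.inr p)] :
    #{d : G.Dart | (∃ p, M.Adj (.inl d) (.inr p)) ∧ d.fst = v} = m := by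
  rw [Subgraph.isPerfectMatching_iff] at hM
  have hpartner (i : Fin m) : ∃ d : G.Dart, M.Adj (.inr (v, i)) (.inl d) := by
    obtain ⟨d | p, h, -⟩ := hM (.inr (v, i))
    · exact ⟨d, h⟩
    · exact h.adj_sub.elim
  choose partner hpartner using hpartner
  have hinj : Function.Injective partner := fun i j hij ↦ by
    have heq := (hM (.inl (partner i))).unique (hpartner i).symm (hij ▸ (hpartner j).symm)
    exact congrArg Prod.snd (Sum.inr.inj heq)
  have himage : ({d | (∃ p, M.Adj (.inl d) (.inr p)) ∧ d.fst = v} : Finset G.Dart) =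
      univ.image partner := by
    ext d
    simp only [mem_filter, mem_univ, true_and, mem_image]
    constructor
    · rintro ⟨⟨⟨w, i⟩, h⟩, rfl⟩
      obtain rfl : d.fst = w := h.adj_sub
      exact ⟨i, by simpa using (hM (.inr (d.fst, i))).unique (hpartner i) h.symm⟩
    · rintro ⟨i, rfl⟩
      exact ⟨⟨_, (hpartner i).symm⟩, (hpartner i).adj_sub⟩
  rw [himage, card_image_of_injective _ hinj, card_univ, Fintype.card_fin]

lemma exists_card_fst_eq_two_splitSymm_mem_iff (hm : 0 < m) (hreg : G.IsRegularOfDegree (m + 2))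
    (hS : ∀ d : G.Dart, G.IsBridge d.edge → d.edge ∈ S) :
    ∃ s : Finset G.Dart, (∀ v, #{d ∈ s | d.fst = v} = 2) ∧ (∀ v, #{d ∈ sᶜ | d.fst = v} = m) ∧
      ∀ d, splitSymm S d ∈ s ↔ d ∈ s := by
  classical
  obtain ⟨M, hM⟩ := exists_isPerfectMatching_gadgetGraph hm hreg hS
  let s : Finset G.Dart := {d | ¬ ∃ p, M.Adj (.inl d) (.inr p)}
  have hcompl (v : V) : #{d ∈ sᶜ | d.fst = v} = m := by
    simpa [s, compl_filter, filter_filter] using card_matched_to_core hM v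
  have hs (d : G.Dart) (hd : d ∈ s) : splitSymm S d ∈ s := by
    by_cases hdS : d.edge ∈ S
    · rwa [splitSymm_of_mem S hdS]
    have hM := Subgraph.isPerfectMatching_iff.1 hM
    obtain ⟨d' | p, h, -⟩ := hM (.inl d)
    · obtain rfl : splitSymm S d = d' := h.adj_sub.2.resolve_right fun h ↦ hdS h.1
      refine mem_filter.2 ⟨mem_univ _, fun ⟨p, hp⟩ ↦ ?_⟩
      simpa using (hM _).unique h.symm hp
    · exact ((mem_filter.1 hd).2 ⟨p, h⟩).elim
  refine ⟨s, fun v ↦ ?_, hcompl, fun d ↦ ⟨fun h ↦ ?_, hs d⟩⟩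
  · have hsum : #{d ∈ s | d.fst = v} + #{d ∈ sᶜ | d.fst = v} = #{d : G.Dart | d.fst = v} := by
      rw [← card_union_of_disjoint (disjoint_filter_filter disjoint_compl_right), ← filter_union,
        union_compl]
    rw [hcompl, card_darts_fst_eq hreg] at hsum
    omega
  · simpa only [splitSymm_involutive S d] using hs _ h

end Gadget

section SplitFlow

variable {V : Type*} [Fintype V] [DecidableEq V] {G : SimpleGraph V} [DecidableRel G.Adj]
  {S : Finset (Sym2 V)}

lemma exists_dart_coloring {m : ℕ} (hm : 0 < m) (hreg : G.IsRegularOfDegree (m + 2))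
    (hS : ∀ d : G.Dart, G.IsBridge d.edge → d.edge ∈ S) :
    ∃ c : G.Dart → ℕ, (∀ d, c d < 2 ↔ c (splitSymm S d) < 2) ∧
      ∀ v, Set.BijOn c {d | d.fst = v} (range (2 + m)) ∧
        Set.BijOn (c ∘ splitSymm S) {d | d.fst = v} (range (2 + m)) := by
  obtain ⟨s, hs, hs', hsymm⟩ := exists_card_fst_eq_two_splitSymm_mem_iff hm hreg hS
  have hsplit (u : Finset G.Dart) (hu : ∀ d, splitSymm S d ∈ u ↔ d ∈ u) (v : V) :
      #{d ∈ u | (splitSymm S d).fst = v} = #{d ∈ u | d.fst = v} := by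
    refine card_nbij' (splitSymm S) (splitSymm S) ?_ ?_ ?_ ?_ <;>
      simp +contextual [Set.MapsTo, Set.LeftInvOn, hu, splitSymm_involutive S _]
  have hsymm' (d : G.Dart) : splitSymm S d ∈ sᶜ ↔ d ∈ sᶜ := by simp [hsymm]
  obtain ⟨c, hcs, hc⟩ := exists_coloring_bijOn_fibers_of_mem_iff_lt
    (fun d : G.Dart ↦ d.fst) (fun d ↦ (splitSymm S d).fst)
    hs (fun v ↦ (hsplit s hsymm v).trans (hs v)) hs' (fun v ↦ (hsplit sᶜ hsymm' v).trans (hs' v))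
  refine ⟨c, fun d ↦ by rw [← hcs, ← hcs, hsymm], fun v ↦ ⟨(hc v).1, (hc v).2.comp ?_⟩⟩
  exact (splitSymm_involutive S).toPerm.bijOn fun d ↦ by simp [splitSymm_involutive S d]

lemma sum_filter_comp_eq_sum_of_bijOn {α β M : Type*} [Fintype α] [AddCommMonoid M] {c : α → β}
    {p : α → Prop} [DecidablePred p] {t : Finset β} (hc : Set.BijOn c {a | p a} t) (w : β → M) :
    ∑ a with p a, w (c a) = ∑ b ∈ t, w b :=
  sum_nbij c (fun a ha ↦ hc.mapsTo (mem_filter.1 ha).2) (by simpa using hc.injOn)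
    (by simpa using hc.surjOn) fun _ _ ↦ rfl

/-- A zero-sum flow with values in `{±1, ±2, ±3, ±4}` on the graph obtained by cutting the edges
in `S` in the middle, encoded as a function on darts: the two halves of an edge in `S` carry
independent values, which are required to be `±2` or `±4`. -/
structure IsSplitFlow (S : Finset (Sym2 V)) (g : G.Dart → ℤ) : Prop where
  ne_zero (d : G.Dart) : g d ≠ 0
  natAbs_le (d : G.Dart) : (g d).natAbs ≤ 4
  natAbs_eq_of_mem (d : G.Dart) : d.edge ∈ S → (g d).natAbs = 2 ∨ (g d).natAbs = 4
  apply_splitSymm (d : G.Dart) : g (splitSymm S d) = g d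
  sum_eq_zero (v : V) : ∑ d with d.fst = v, g d = 0

variable (G S) in
/-- Split flows for `S` exist with any prescribed absolute value on any one half-edge of `S`. -/
def HasFlexibleSplitFlows : Prop :=
  ∀ (d₀ : G.Dart) (μ : ℕ), μ = 2 ∨ μ = 4 →
    ∃ g : G.Dart → ℤ, IsSplitFlow S g ∧ (d₀.edge ∈ S → (g d₀).natAbs = μ)

lemma hasFlexibleSplitFlows_of_isBridge_mem {m : ℕ} (hm : 0 < m)
    (hreg : G.IsRegularOfDegree (m + 2)) (hS : ∀ d : G.Dart, G.IsBridge d.edge → d.edge ∈ S) :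
    HasFlexibleSplitFlows G S := by
  intro d₀ μ hμ
  obtain ⟨c, hcsplit, hc⟩ := exists_dart_coloring hm hreg hS
  have hc₀ : c d₀ < 2 + m := by simpa using (hc d₀.fst).1.mapsTo rfl
  obtain ⟨w, habs, hadd, hw₀, hsum⟩ :=
    exists_weights_sum_range_eq_zero hm hc₀ (k := μ / 2) (by omega)
  let g (d : G.Dart) : ℤ := w (c d) + w (c (splitSymm S d))
  have hgS (d : G.Dart) (hd : d.edge ∈ S) : (g d).natAbs = 2 * (w (c d)).natAbs := by
    simp only [g, splitSymm_of_mem S hd]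
    omega
  refine ⟨g, ⟨fun d ↦ hadd _ _ (hcsplit d), fun d ↦ ?_, fun d hd ↦ ?_, fun d ↦ ?_, fun v ↦ ?_⟩,
    fun hd₀ ↦ ?_⟩
  · have hadd_le : (g d).natAbs ≤ (w (c d)).natAbs + (w (c (splitSymm S d))).natAbs :=
      Int.natAbs_add_le _ _
    grind
  · grind
  · simp only [g, splitSymm_involutive S d, add_comm]
  · have htails := sum_filter_comp_eq_sum_of_bijOn (hc v).1 w
    have hheads := sum_filter_comp_eq_sum_of_bijOn (hc v).2 w
    simp only [Function.comp_apply] at hheads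
    rw [sum_add_distrib, htails, hheads, hsum, add_zero]
  · rw [hgS d₀ hd₀, hw₀]
    omega

lemma IsSplitFlow.neg {g : G.Dart → ℤ} (hg : IsSplitFlow S g) : IsSplitFlow S (-g) where
  ne_zero d := neg_ne_zero.2 (hg.ne_zero d)
  natAbs_le d := by simpa using hg.natAbs_le d
  natAbs_eq_of_mem d := by simpa using hg.natAbs_eq_of_mem d
  apply_splitSymm d := by simpa using hg.apply_splitSymm d
  sum_eq_zero v := by simpa using hg.sum_eq_zero v

lemma IsSplitFlow.glue {b : G.Dart} {X : Set V} [DecidablePred (· ∈ X)] (hfst : b.fst ∈ X)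
    (hsnd : b.snd ∉ X) (hX : ∀ d : G.Dart, d.edge ≠ b.edge → (d.fst ∈ X ↔ d.snd ∈ X))
    {g₁ g₂ : G.Dart → ℤ} (hg₁ : IsSplitFlow (insert b.edge S) g₁)
    (hg₂ : IsSplitFlow (insert b.edge S) g₂) (hb : g₁ b = g₂ b.symm) :
    IsSplitFlow S fun d ↦ if d.fst ∈ X then g₁ d else g₂ d where
  ne_zero d := by
    split_ifs
    exacts [hg₁.ne_zero d, hg₂.ne_zero d]
  natAbs_le d := by
    split_ifs
    exacts [hg₁.natAbs_le d, hg₂.natAbs_le d]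
  natAbs_eq_of_mem d hd := by
    split_ifs
    exacts [hg₁.natAbs_eq_of_mem d (mem_insert_of_mem hd),
      hg₂.natAbs_eq_of_mem d (mem_insert_of_mem hd)]
  apply_splitSymm d := by
    by_cases hdS : d.edge ∈ S
    · rw [splitSymm_of_mem S hdS]
    rw [splitSymm_of_notMem S hdS]
    by_cases hdb : d.edge = b.edge
    · obtain rfl | rfl := (dart_edge_eq_iff d b).1 hdb <;> simp [hfst, hsnd, hb]
    · have hd : d.edge ∉ insert b.edge S := by simp [hdb, hdS]
      have hd₁ := hg₁.apply_splitSymm d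
      have hd₂ := hg₂.apply_splitSymm d
      rw [splitSymm_of_notMem _ hd] at hd₁ hd₂
      simp only [hd₁, hd₂, hX d hdb]
      rfl
  sum_eq_zero v := by
    rw [sum_congr rfl fun d hd ↦ by rw [(mem_filter.1 hd).2]]
    split_ifs
    exacts [hg₁.sum_eq_zero v, hg₂.sum_eq_zero v]

lemma HasFlexibleSplitFlows.of_insert {b : G.Dart} (hb : G.IsBridge b.edge)
    (h : HasFlexibleSplitFlows G (insert b.edge S)) : HasFlexibleSplitFlows G S := by
  classical
  intro d₀ μ hμ
  obtain ⟨X, hfst, hsnd, hX⟩ := isBridge_edge_iff_exists_set.1 hb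
  wlog hd₀ : d₀.fst ∈ X generalizing b X
  · refine this (b := b.symm) (by rwa [b.edge_symm]) (by rwa [b.edge_symm]) Xᶜ hsnd
      (not_not.2 hfst) (fun d hd ↦ not_congr (hX d (by rwa [b.edge_symm] at hd))) hd₀
  obtain ⟨g₁, hg₁, hg₁d₀⟩ := h d₀ μ hμ
  obtain ⟨g₂, hg₂, hg₂b⟩ := h b.symm (g₁ b).natAbs (hg₁.natAbs_eq_of_mem b (mem_insert_self _ _))
  obtain ⟨g₂', hg₂', hb'⟩ : ∃ g, IsSplitFlow (insert b.edge S) g ∧ g₁ b = g b.symm := by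
    obtain heq | heq := Int.natAbs_eq_natAbs_iff.1 (hg₂b (by simp))
    exacts [⟨g₂, hg₂, heq.symm⟩, ⟨-g₂, hg₂.neg, by simp [heq]⟩]
  refine ⟨_, hg₁.glue hfst hsnd hX hg₂' hb', fun hd₀S ↦ ?_⟩
  rw [if_pos hd₀]
  exact hg₁d₀ (mem_insert_of_mem hd₀S)

lemma HasFlexibleSplitFlows.empty (hS : ∀ e ∈ S, e ∈ G.edgeSet ∧ G.IsBridge e)
    (h : HasFlexibleSplitFlows G S) : HasFlexibleSplitFlows G ∅ := by
  induction S using Finset.induction_on with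
  | empty => exact h
  | insert e S _ ih =>
    obtain ⟨hadj, hbridge⟩ := hS e (mem_insert_self e S)
    obtain ⟨b, rfl⟩ : ∃ b : G.Dart, b.edge = e := by
      induction e with | _ u v => exact ⟨⟨(u, v), hadj⟩, rfl⟩
    exact ih (fun e he ↦ hS e (mem_insert_of_mem he)) (h.of_insert hbridge)

lemma exists_isSplitFlow_empty {m : ℕ} (hm : 0 < m) (hreg : G.IsRegularOfDegree (m + 2)) :
    ∃ g : G.Dart → ℤ, IsSplitFlow ∅ g := by
  classical
  obtain _ | ⟨⟨d₀⟩⟩ := isEmpty_or_nonempty G.Dart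
  · exact ⟨0, by constructor <;> simp⟩
  · have hflex : HasFlexibleSplitFlows G {e ∈ G.edgeFinset | G.IsBridge e} :=
      hasFlexibleSplitFlows_of_isBridge_mem hm hreg fun d hd ↦ by simp [hd, d.edge_mem]
    obtain ⟨g, hg, -⟩ := hflex.empty (fun e he ↦ by simpa using he) d₀ 2 (.inl rfl)
    exact ⟨g, hg⟩

lemma sum_incidenceFinset_eq_sum_darts {M : Type*} [AddCommMonoid M] (f : Sym2 V → M) (v : V) :
    ∑ e ∈ G.incidenceFinset v, f e = ∑ d : G.Dart with d.fst = v, f d.edge := by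
  refine (sum_nbij Dart.edge ?_ ?_ ?_ fun _ _ ↦ rfl).symm
  · rintro d hd
    obtain rfl := (mem_filter.1 hd).2
    exact (G.mem_incidenceFinset _ _).2 ⟨d.edge_mem, Sym2.mem_mk_left _ _⟩
  · intro d hd d' hd' h
    simp only [coe_filter, mem_univ, true_and, Set.mem_ofPred_eq] at hd hd'
    refine ((dart_edge_eq_iff d d').1 h).resolve_right fun hsymm ↦ d'.adj.ne ?_
    rw [hd', ← hd, hsymm]
    rfl
  · intro e he
    obtain ⟨hadj, u, rfl⟩ := (G.mem_incidenceFinset _ _).1 he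
    exact ⟨⟨(v, u), hadj⟩, by simp, rfl⟩

end SplitFlow

theorem stmt_4_general {V : Type*} [Fintype V] [DecidableEq V] (G : SimpleGraph V)
    [DecidableRel G.Adj] (r : ℕ) (hr : 3 ≤ r) (hreg : G.IsRegularOfDegree r) :
    ∃ f : Sym2 V → ℤ,
      (∀ e ∈ G.edgeFinset, f e ≠ 0 ∧ (f e).natAbs ≤ 4) ∧
      (∀ v : V, ∑ e ∈ G.incidenceFinset v, f e = 0) := by
  obtain ⟨m, rfl⟩ := Nat.exists_eq_add_of_le' (show 2 ≤ r by omega)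
  obtain ⟨g, hg⟩ := exists_isSplitFlow_empty (show 0 < m by omega) hreg
  have hsymm : g.FactorsThrough Dart.edge := fun d d' h ↦ by
    obtain rfl | rfl := (dart_edge_eq_iff d d').1 h
    exacts [rfl, hg.apply_splitSymm d']
  have hf (d : G.Dart) : Function.extend Dart.edge g 0 d.edge = g d := hsymm.extend_apply 0 d
  refine ⟨Function.extend Dart.edge g 0, fun e he ↦ ?_, fun v ↦ ?_⟩
  · induction e with | _ u v =>
    have huv := hf ⟨(u, v), mem_edgeFinset.1 he⟩
    exact huv ▸ ⟨hg.ne_zero _, hg.natAbs_le _⟩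
  · rw [sum_incidenceFinset_eq_sum_darts, sum_congr rfl fun d _ ↦ hf d, hg.sum_eq_zero]

/-- Let `r ≥ 3` with `r ≠ 5`. Then every `r`-regular graph admits a zero-sum 5-flow. -/
theorem stmt_4 {V : Type*} [Fintype V] [DecidableEq V] (G : SimpleGraph V)
    [DecidableRel G.Adj] (r : ℕ) (hr : 3 ≤ r) (hr5 : r ≠ 5)
    (hreg : G.IsRegularOfDegree r) :
    ∃ f : Sym2 V → ℤ,
      (∀ e ∈ G.edgeFinset, f e ≠ 0 ∧ (f e).natAbs ≤ 4) ∧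
      (∀ v : V, ∑ e ∈ G.incidenceFinset v, f e = 0) :=
  stmt_4_general G r hr hreg
end
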